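/- arXiv:1012.5613 — 2 statements merged into one kernel-verified Lean document; each statement's English description precedes it below -/
import Mathlib

section
/- With j as above and k ∈ ℕ⁺, for every θ ∈ S¹ one has j(kT₀, θ) = Σ_{j=0}^{k−1} j(T₀, σ_j), where σ₀, …, σ_{k−1} are the k distinct k-th roots of θ in ℂ. -/
/-- Eigenfunctions of `ℒ_{σ,T} y = −ÿ − A(t) y` with eigenvalue `μ`, subject to the
twisted periodicity condition `y(t+T) = σ y(t)`. -/
def twistedEigSet (N : ℕ) (A : ℝ → Matrix (Fin N) (Fin N) ℝ) (T : ℝ) (σ : ℂ)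
    (μ : ℝ) : Set (ℝ → (Fin N → ℂ)) :=
  {y | ContDiff ℝ 2 y ∧ (∀ t, y (t + T) = σ • y t) ∧
    ∀ t, -(deriv (deriv y) t) - ((A t).map (Complex.ofReal)).mulVec (y t)
      = (μ : ℂ) • y t}

/-- The eigenspace of `ℒ_{σ,T}` for the eigenvalue `μ`. -/
noncomputable def twistedEigSpace (N : ℕ) (A : ℝ → Matrix (Fin N) (Fin N) ℝ)
    (T : ℝ) (σ : ℂ) (μ : ℝ) : Submodule ℂ (ℝ → (Fin N → ℂ)) :=
  Submodule.span ℂ (twistedEigSet N A T σ μ)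

/-- `j(T,σ)`: the number of negative eigenvalues of `ℒ_{σ,T}`, counted with
multiplicity. -/
noncomputable def twistedNegCount (N : ℕ) (A : ℝ → Matrix (Fin N) (Fin N) ℝ)
    (T : ℝ) (σ : ℂ) : ℕ :=
  ∑ᶠ (μ : ℝ) (_ : μ < 0), Module.finrank ℂ (twistedEigSpace N A T σ μ)

/-!
Let `S` be translation by `T`. Since `A` is `T`-periodic, `S` preserves the space of solutions of
`-y″ - A y = μ y`, and `S ^ k` is translation by `k T`. The eigenspace for `(k T, θ)` is therefore
the kernel of `S ^ k - θ` on this space, and as `X ^ k - θ` is squarefree, it is the direct sum of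
the eigenspaces of `S` for the `k`-th roots of `θ`.

Summing dimensions over all `μ < 0` requires that there are finitely many negative eigenvalues,
each of finite multiplicity. If a sum `u` of eigenfunctions `yᵢ` for distinct `μᵢ < 0` vanishes on
a grid of mesh `h`, the Poincaré inequality on the cells gives `∫ ‖u‖² ≤ 4 h² ∫ ‖u'‖²`, while
integration by parts and orthogonality give `∫ ‖u'‖² ≤ c ∫ ‖u‖² + ∑ μᵢ ∫ ‖yᵢ‖²`, where `c` bounds
the quadratic forms of `A`. For `4 h² c ≤ 1` this forces `∑ μᵢ ∫ ‖yᵢ‖² ≥ 0`, hence all `yᵢ = 0`. So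
evaluation on a fine grid embeds the sum of the negative eigenspaces in a finite-dimensional
space.
-/

open Polynomial MeasureTheory Module Module.End
open scoped InnerProductSpace

section LinearAlgebra

variable {K V : Type*} [Field K] [AddCommGroup V] [Module K V]

theorem finrank_eq_sum_finrank_eigenspace_of_aeval_eq_zero [IsAlgClosed K] [DecidableEq K]
    [FiniteDimensional K V] {f : End K V} {p : K[X]} (hp : Squarefree p) (hf : aeval f p = 0) :
    finrank K V = ∑ μ ∈ p.roots.toFinset, finrank K (f.eigenspace μ) := by
  have eigenspace_eq_bot {μ : K} (hμ : μ ∉ p.roots.toFinset) : f.eigenspace μ = ⊥ := by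
    by_contra hne
    obtain ⟨x, hx⟩ := HasEigenvalue.exists_hasEigenvector hne
    have hroot : p.eval μ • x = 0 := by
      rw [← aeval_apply_of_hasEigenvector hx, hf, LinearMap.zero_apply]
    exact hμ (by simpa [hp.ne_zero, hx.2] using hroot)
  have htop : ⨆ μ : p.roots.toFinset, f.eigenspace (μ : K) = ⊤ := by
    rw [eq_top_iff, ← (isSemisimple_of_squarefree_aeval_eq_zero hp hf).iSup_eigenspace_eq_top]
    refine iSup_le fun μ => ?_
    by_cases hμ : μ ∈ p.roots.toFinset
    · exact le_iSup (fun μ : p.roots.toFinset => f.eigenspace (μ : K)) ⟨μ, hμ⟩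
    · exact (eigenspace_eq_bot hμ).trans_le bot_le
  have hint := DirectSum.isInternal_submodule_of_iSupIndep_of_iSup_eq_top
    (f.eigenspaces_iSupIndep.comp Subtype.val_injective) htop
  rw [← (LinearEquiv.ofBijective (DirectSum.coeLinearMap _) hint).finrank_eq, finrank_directSum]
  exact Finset.sum_coe_sort p.roots.toFinset fun μ => finrank K (f.eigenspace μ)

theorem coe_aeval_restrict {f : End K V} {W : Submodule K V} (hW : ∀ x ∈ W, f x ∈ W)
    (p : K[X]) (x : W) : (aeval (f.restrict hW) p x : V) = aeval f p x := by
  induction p using Polynomial.induction_on' with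
  | add p q hp hq => simp [hp, hq]
  | monomial n a =>
    simp only [aeval_monomial, End.pow_restrict n hW]
    simp

theorem finrank_inf_ker_aeval [IsAlgClosed K] [DecidableEq K] {f : End K V} {W : Submodule K V}
    (hW : ∀ x ∈ W, f x ∈ W) {p : K[X]} (hp : Squarefree p)
    [FiniteDimensional K ↥(W ⊓ LinearMap.ker (aeval f p))] :
    finrank K ↥(W ⊓ LinearMap.ker (aeval f p)) =
      ∑ μ ∈ p.roots.toFinset, finrank K ↥(W ⊓ f.eigenspace μ) := by
  set U := W ⊓ LinearMap.ker (aeval f p) with hU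
  have hcomm : Commute (aeval f p) f := by
    simpa using (Commute.all p X).map (aeval f)
  have hfU : ∀ x ∈ U, f x ∈ U := fun x hx => ⟨hW x hx.1, LinearMap.mem_ker.2 <| by
    rw [← End.mul_apply, hcomm.eq, End.mul_apply, hx.2, map_zero]⟩
  have haeval : aeval (f.restrict hfU) p = 0 := by
    ext x
    rw [coe_aeval_restrict]
    exact x.2.2
  rw [finrank_eq_sum_finrank_eigenspace_of_aeval_eq_zero hp haeval]
  refine Finset.sum_congr rfl fun μ hμ => ?_
  have hroot : p.eval μ = 0 := (mem_roots'.1 (Multiset.mem_toFinset.1 hμ)).2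
  have hker : f.eigenspace μ ≤ LinearMap.ker (aeval f p) := fun x hx => by
    rw [LinearMap.mem_ker, aeval_apply_of_mem_apply_eq_smul (mem_eigenspace_iff.1 hx), hroot,
      zero_smul]
  have hinf : U ⊓ f.eigenspace μ = W ⊓ f.eigenspace μ := by
    rw [hU, inf_assoc, inf_eq_right.2 hker]
  rw [← hinf, ← Submodule.map_comap_subtype, Submodule.finrank_map_subtype_eq,
    ← genEigenspace_restrict f U 1 μ hfU]

theorem finite_ne_bot_of_sum_map_eq_zero_imp_eq_zero {F ι : Type*} [AddCommGroup F] [Module K F]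
    [FiniteDimensional K F] (G : V →ₗ[K] F) {W : ι → Submodule K V}
    (hG : ∀ (s : Finset ι) (y : ι → V), (∀ i ∈ s, y i ∈ W i) → G (∑ i ∈ s, y i) = 0 →
      ∀ i ∈ s, y i = 0) : {i | W i ≠ ⊥}.Finite := by
  have hindep : iSupIndep fun i => (W i).map G := by
    rw [iSupIndep_iff_finsetSum_eq_zero_imp_eq_zero]
    intro s z hz hsum i hi
    choose! y hyW hyz using hz
    rw [← hyz i hi, hG s y hyW (by rwa [map_sum, Finset.sum_congr rfl hyz]) i hi, map_zero]
  refine (WellFoundedGT.finite_ne_bot_of_iSupIndep hindep).subset fun i hi hmap => hi ?_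
  refine (Submodule.eq_bot_iff _).2 fun x hx => ?_
  have hGx : G x = 0 := LinearMap.le_ker_iff_map.2 hmap hx
  exact hG {i} (fun _ => x) (by simpa using hx) (by simpa using hGx) i (by simp)

end LinearAlgebra

section Hill

variable {E : Type*} [NormedAddCommGroup E] [NormedSpace ℂ E]

/-- The translation operator `(S y)(t) = y (t + T)`. Its eigenvectors for `σ` are the nonzero
functions satisfying the twisted periodicity condition `y (t + T) = σ y(t)`. -/
def translation (E : Type*) [AddCommGroup E] [Module ℂ E] (T : ℝ) : End ℂ (ℝ → E) :=
  LinearMap.funLeft ℂ E (· + T)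

theorem translation_natCast_mul (n : ℕ) (T : ℝ) :
    translation E (n * T) = translation E T ^ n := by
  induction n with
  | zero => ext y t; simp [translation]
  | succ n ih =>
    rw [pow_succ, ← ih]
    ext y t
    simp [translation, LinearMap.funLeft_apply, add_mul, add_assoc]

/-- The `C²` solutions on all of `ℝ` of Hill's equation `-y″ - A(t) y = μ y`, with no boundary
condition: the space on which the translation operators act. -/
def hillSolutions (A : ℝ → E →ₗ[ℂ] E) (μ : ℝ) : Submodule ℂ (ℝ → E) where
  carrier := {y | ContDiff ℝ 2 y ∧ ∀ t, -iteratedDeriv 2 y t - A t (y t) = (μ : ℂ) • y t}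
  zero_mem' := ⟨contDiff_const, fun t => by simp [Pi.zero_def]⟩
  add_mem' := by
    rintro y z ⟨hy, hy'⟩ ⟨hz, hz'⟩
    refine ⟨hy.add hz, fun t => ?_⟩
    rw [iteratedDeriv_add hy.contDiffAt hz.contDiffAt, Pi.add_apply, map_add, smul_add, ← hy',
      ← hz']
    abel
  smul_mem' := by
    rintro c y ⟨hy, hy'⟩
    refine ⟨hy.const_smul c, fun t => ?_⟩
    rw [iteratedDeriv_const_smul_field, Pi.smul_apply, map_smul, smul_comm, ← hy', smul_sub,
      smul_neg]

/-- The eigenspace for `μ` of the Hill operator `-d²/dt² - A(t)` with boundary condition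
`y (t + T) = σ y(t)`, encoded as an eigenspace of `translation` among the solutions. -/
def hillEigenspace (A : ℝ → E →ₗ[ℂ] E) (T : ℝ) (σ : ℂ) (μ : ℝ) : Submodule ℂ (ℝ → E) :=
  hillSolutions A μ ⊓ (translation E T).eigenspace σ

/-- The number of negative eigenvalues of the Hill operator with boundary condition
`y (t + T) = σ y(t)`, counted with multiplicity. As a `finsum` of `finrank`s it is meaningful only
when the negative eigenvalues are finite in number and of finite multiplicity. -/
noncomputable def hillNegCount (A : ℝ → E →ₗ[ℂ] E) (T : ℝ) (σ : ℂ) : ℕ :=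
  ∑ᶠ (μ : ℝ) (_ : μ < 0), finrank ℂ (hillEigenspace A T σ μ)

variable {A : ℝ → E →ₗ[ℂ] E} {T : ℝ} {σ : ℂ} {μ : ℝ}

theorem hillNegCount_eq_finsum_Iio :
    hillNegCount A T σ = ∑ᶠ μ : Set.Iio (0 : ℝ), finrank ℂ (hillEigenspace A T σ μ) :=
  (finsum_set_coe_eq_finsum_mem (f := fun μ => finrank ℂ (hillEigenspace A T σ μ)) _).symm

theorem mem_hillEigenspace_iff {y : ℝ → E} :
    y ∈ hillEigenspace A T σ μ ↔ ContDiff ℝ 2 y ∧ (∀ t, y (t + T) = σ • y t) ∧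
      ∀ t, -deriv (deriv y) t - A t (y t) = (μ : ℂ) • y t := by
  have hderiv : iteratedDeriv 2 y = deriv (deriv y) := by
    rw [iteratedDeriv_succ, iteratedDeriv_one]
  rw [← hderiv, hillEigenspace, Submodule.mem_inf, mem_eigenspace_iff, funext_iff, and_comm,
    and_left_comm]
  rfl

theorem contDiff_of_mem_hillEigenspace {y : ℝ → E} (hy : y ∈ hillEigenspace A T σ μ) :
    ContDiff ℝ 2 y :=
  (mem_hillEigenspace_iff.1 hy).1

theorem apply_add_of_mem_hillEigenspace {y : ℝ → E} (hy : y ∈ hillEigenspace A T σ μ)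
    (t : ℝ) : y (t + T) = σ • y t :=
  (mem_hillEigenspace_iff.1 hy).2.1 t

theorem deriv_deriv_of_mem_hillEigenspace {y : ℝ → E} (hy : y ∈ hillEigenspace A T σ μ)
    (t : ℝ) : deriv (deriv y) t = -(A t (y t) + μ • y t) := by
  rw [← Complex.coe_smul, ← (mem_hillEigenspace_iff.1 hy).2.2 t]
  abel

theorem translation_mem_hillSolutions (hA : ∀ t, A (t + T) = A t) {y : ℝ → E}
    (hy : y ∈ hillSolutions A μ) : translation E T y ∈ hillSolutions A μ := by
  refine ⟨hy.1.comp (contDiff_id.add contDiff_const), fun t => ?_⟩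
  have heq : -iteratedDeriv 2 y (t + T) - A t (y (t + T)) = (μ : ℂ) • y (t + T) := by
    rw [← hA t, hy.2]
  simpa [translation, LinearMap.funLeft, Function.comp_def, iteratedDeriv_comp_add_const]

theorem finrank_hillEigenspace_natCast_mul (hA : ∀ t, A (t + T) = A t) {k : ℕ} (hk : k ≠ 0)
    {θ : ℂ} (hθ : θ ≠ 0) [FiniteDimensional ℂ (hillEigenspace A (k * T) θ μ)] :
    finrank ℂ (hillEigenspace A (k * T) θ μ) =
      ∑ σ ∈ ((X : ℂ[X]) ^ k - C θ).roots.toFinset, finrank ℂ (hillEigenspace A T σ μ) := by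
  have hsep : ((X : ℂ[X]) ^ k - C θ).Separable :=
    separable_X_pow_sub_C θ (Nat.cast_ne_zero.2 hk) hθ
  have heq : hillEigenspace A (k * T) θ μ =
      hillSolutions A μ ⊓ LinearMap.ker (aeval (translation E T) (X ^ k - C θ)) := by
    rw [hillEigenspace, translation_natCast_mul, eigenspace_def]
    simp [Algebra.algebraMap_eq_smul_one]
  have : FiniteDimensional ℂ
      ↥(hillSolutions A μ ⊓ LinearMap.ker (aeval (translation E T) (X ^ k - C θ))) :=
    heq ▸ inferInstance
  rw [heq]
  exact finrank_inf_ker_aeval (fun _ => translation_mem_hillSolutions hA) hsep.squarefree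

section Sum

variable {ι : Type*} {s : Finset ι} {μ : ι → ℝ} {y : ι → ℝ → E}

theorem contDiff_sum_of_mem_hillEigenspace (hy : ∀ i ∈ s, y i ∈ hillEigenspace A T σ (μ i)) :
    ContDiff ℝ 2 (∑ i ∈ s, y i) := by
  rw [Finset.sum_fn]
  exact ContDiff.sum fun i hi => contDiff_of_mem_hillEigenspace (hy i hi)

theorem sum_apply_add_of_mem_hillEigenspace (hy : ∀ i ∈ s, y i ∈ hillEigenspace A T σ (μ i))
    (t : ℝ) : (∑ i ∈ s, y i) (t + T) = σ • (∑ i ∈ s, y i) t := by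
  rw [Finset.sum_apply, Finset.sum_apply, Finset.smul_sum]
  exact Finset.sum_congr rfl fun i hi => apply_add_of_mem_hillEigenspace (hy i hi) t

theorem deriv_deriv_sum_of_mem_hillEigenspace (hy : ∀ i ∈ s, y i ∈ hillEigenspace A T σ (μ i))
    (t : ℝ) : deriv (deriv (∑ i ∈ s, y i)) t =
      -(A t ((∑ i ∈ s, y i) t) + ∑ i ∈ s, μ i • y i t) := by
  have hdiff₂ : ∀ i ∈ s, ContDiff ℝ 2 (y i) := fun i hi =>
    contDiff_of_mem_hillEigenspace (hy i hi)
  have hderiv : deriv (∑ i ∈ s, y i) = ∑ i ∈ s, deriv (y i) := by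
    ext1 t
    rw [deriv_sum fun i hi => (hdiff₂ i hi).differentiable two_ne_zero t, Finset.sum_apply]
  rw [hderiv, deriv_sum fun i hi => (hdiff₂ i hi).deriv'.differentiable one_ne_zero t,
    Finset.sum_congr rfl fun i hi => deriv_deriv_of_mem_hillEigenspace (hy i hi) t,
    Finset.sum_neg_distrib, Finset.sum_add_distrib, Finset.sum_apply, map_sum]

end Sum

end Hill

section Twisted

variable {E : Type*} [NormedAddCommGroup E] [NormedSpace ℂ E] {T : ℝ} {σ : ℂ} {u : ℝ → E}

theorem deriv_add_eq_smul_deriv (hu : ∀ t, u (t + T) = σ • u t) (t : ℝ) :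
    deriv u (t + T) = σ • deriv u t := by
  rw [← deriv_comp_add_const, funext hu, deriv_fun_const_smul_field]

theorem eq_zero_of_integral_norm_sq_eq_zero (hT : 0 < T) (hσ : ‖σ‖ = 1)
    (hu : Continuous u) (hper : ∀ t, u (t + T) = σ • u t)
    (hint : ∫ t in (0 : ℝ)..T, ‖u t‖ ^ 2 = 0) : u = 0 := by
  have hnorm : Function.Periodic (fun t => ‖u t‖) T := fun t => by
    simp only [hper, norm_smul, hσ, one_mul]
  by_contra hne
  obtain ⟨s, hs⟩ := Function.ne_iff.1 hne
  obtain ⟨t, ht, hst⟩ := hnorm.exists_mem_Ico₀ hT s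
  refine (intervalIntegral.integral_pos hT (by fun_prop) (fun t _ => sq_nonneg ‖u t‖)
    ⟨t, Set.Ico_subset_Icc_self ht, ?_⟩).ne' hint
  rw [← hst]
  exact pow_pos (norm_pos_iff.2 hs) 2

end Twisted

section Poincare

variable {F : Type*} [NormedAddCommGroup F] [InnerProductSpace ℝ F] {f : ℝ → F}

theorem integral_norm_sq_le_of_eq_zero_left (hf : ContDiff ℝ 1 f) {a b : ℝ} (hab : a ≤ b)
    (ha : f a = 0) :
    ∫ t in a..b, ‖f t‖ ^ 2 ≤ 4 * (b - a) ^ 2 * ∫ t in a..b, ‖deriv f t‖ ^ 2 := by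
  have hparts : ∫ t in a..b, (2 * (b - t) * ⟪f t, deriv f t⟫_ℝ - ‖f t‖ ^ 2) = 0 := by
    have hderiv (t : ℝ) : HasDerivAt (fun s => (b - s) * ‖f s‖ ^ 2)
        (2 * (b - t) * ⟪f t, deriv f t⟫_ℝ - ‖f t‖ ^ 2) t := by
      have hft : HasDerivAt f (deriv f t) t := (hf.differentiable one_ne_zero t).hasDerivAt
      refine (((hasDerivAt_id t).const_sub b).mul hft.norm_sq).congr_deriv ?_
      simp only [id_eq]
      ring
    rw [intervalIntegral.integral_eq_sub_of_hasDerivAt (fun t _ => hderiv t)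
      (Continuous.intervalIntegrable (by fun_prop) a b)]
    simp [ha]
  have hpointwise : ∀ t ∈ Set.Icc a b,
      ‖f t‖ ^ 2 + 2 * (2 * (b - t) * ⟪f t, deriv f t⟫_ℝ - ‖f t‖ ^ 2) ≤
        4 * (b - a) ^ 2 * ‖deriv f t‖ ^ 2 := by
    intro t ht
    -- The factor `2 (b - t)` makes the cross term match the integrand of `hparts`.
    have hsq : 0 ≤ ‖f t - (2 * (b - t)) • deriv f t‖ ^ 2 := sq_nonneg _
    rw [norm_sub_sq_real, inner_smul_right, norm_smul, mul_pow, Real.norm_eq_abs, sq_abs] at hsq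
    have hweight : (b - t) ^ 2 ≤ (b - a) ^ 2 :=
      pow_le_pow_left₀ (sub_nonneg.2 ht.2) (by linarith [ht.1]) 2
    nlinarith [mul_le_mul_of_nonneg_right hweight (sq_nonneg ‖deriv f t‖)]
  calc ∫ t in a..b, ‖f t‖ ^ 2
      = ∫ t in a..b, (‖f t‖ ^ 2 + 2 * (2 * (b - t) * ⟪f t, deriv f t⟫_ℝ - ‖f t‖ ^ 2)) := by
        rw [intervalIntegral.integral_add, intervalIntegral.integral_const_mul, hparts, mul_zero,
          add_zero] <;> exact Continuous.intervalIntegrable (by fun_prop) a b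
    _ ≤ ∫ t in a..b, 4 * (b - a) ^ 2 * ‖deriv f t‖ ^ 2 :=
        intervalIntegral.integral_mono_on hab (Continuous.intervalIntegrable (by fun_prop) a b)
          (Continuous.intervalIntegrable (by fun_prop) a b) hpointwise
    _ = 4 * (b - a) ^ 2 * ∫ t in a..b, ‖deriv f t‖ ^ 2 :=
        intervalIntegral.integral_const_mul _ _

theorem integral_norm_sq_le_of_eq_zero_on_grid (hf : ContDiff ℝ 1 f) {h : ℝ} (hh : 0 ≤ h) {M : ℕ}
    (hgrid : ∀ j < M, f (j * h) = 0) :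
    ∫ t in (0 : ℝ)..M * h, ‖f t‖ ^ 2 ≤ 4 * h ^ 2 * ∫ t in (0 : ℝ)..M * h, ‖deriv f t‖ ^ 2 := by
  have hsplit {g : ℝ → ℝ} (hg : Continuous g) : ∫ t in (0 : ℝ)..M * h, g t =
      ∑ j ∈ Finset.range M, ∫ t in (j * h : ℝ)..((j + 1 : ℕ) * h : ℝ), g t := by
    rw [intervalIntegral.sum_integral_adjacent_intervals (a := fun j : ℕ => (j * h : ℝ))
      fun j _ => hg.intervalIntegrable _ _]
    simp
  rw [hsplit (by fun_prop), hsplit (by fun_prop), Finset.mul_sum]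
  refine Finset.sum_le_sum fun j hj => ?_
  have hlen : ((j + 1 : ℕ) * h : ℝ) - j * h = h := by push_cast; ring
  have hpiece := integral_norm_sq_le_of_eq_zero_left hf
    (b := (j + 1 : ℕ) * h) (by linarith) (hgrid j (Finset.mem_range.1 hj))
  rwa [hlen] at hpiece

end Poincare

-- Only real parts of `L²` pairings enter the energy argument, so `E` gets its real inner product.
attribute [local instance] InnerProductSpace.complexToReal

section Energy

variable {E : Type*} [NormedAddCommGroup E] [InnerProductSpace ℂ E] {A : ℝ → E →ₗ[ℂ] E}
  {T : ℝ} {σ : ℂ}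

theorem real_inner_smul_smul_of_norm_eq_one (hσ : ‖σ‖ = 1) (x y : E) :
    ⟪σ • x, σ • y⟫_ℝ = ⟪x, y⟫_ℝ := by
  rw [real_inner_eq_re_inner ℂ, real_inner_eq_re_inner ℂ, inner_smul_left, inner_smul_right,
    ← mul_assoc, RCLike.conj_mul, hσ]
  simp

theorem integral_inner_deriv_left (hσ : ‖σ‖ = 1) {u v : ℝ → E} (hu : ContDiff ℝ 1 u)
    (hv : ContDiff ℝ 1 v) (hu_per : ∀ t, u (t + T) = σ • u t) (hv_per : ∀ t, v (t + T) = σ • v t) :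
    ∫ t in (0 : ℝ)..T, ⟪deriv u t, v t⟫_ℝ = -∫ t in (0 : ℝ)..T, ⟪u t, deriv v t⟫_ℝ := by
  have hderiv (t : ℝ) : HasDerivAt (fun t => ⟪u t, v t⟫_ℝ)
      (⟪u t, deriv v t⟫_ℝ + ⟪deriv u t, v t⟫_ℝ) t :=
    (hu.differentiable one_ne_zero t).hasDerivAt.inner ℝ
      (hv.differentiable one_ne_zero t).hasDerivAt
  have hsum : ∫ t in (0 : ℝ)..T, (⟪u t, deriv v t⟫_ℝ + ⟪deriv u t, v t⟫_ℝ) = 0 := by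
    rw [intervalIntegral.integral_eq_sub_of_hasDerivAt (fun t _ => hderiv t)
      (Continuous.intervalIntegrable (by fun_prop) 0 T), sub_eq_zero, ← zero_add T, hu_per,
      hv_per, real_inner_smul_smul_of_norm_eq_one hσ]
  rw [intervalIntegral.integral_add (Continuous.intervalIntegrable (by fun_prop) 0 T)
    (Continuous.intervalIntegrable (by fun_prop) 0 T)] at hsum
  linarith

theorem integral_inner_eq_zero_of_mem_hillEigenspace (hσ : ‖σ‖ = 1)
    (hsymm : ∀ t, (A t).IsSymmetric) {μ ν : ℝ} (hμν : μ ≠ ν) {y z : ℝ → E}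
    (hy : y ∈ hillEigenspace A T σ μ) (hz : z ∈ hillEigenspace A T σ ν) :
    ∫ t in (0 : ℝ)..T, ⟪y t, z t⟫_ℝ = 0 := by
  have hy₂ := contDiff_of_mem_hillEigenspace hy
  have hz₂ := contDiff_of_mem_hillEigenspace hz
  have hy_per := apply_add_of_mem_hillEigenspace hy
  have hz_per := apply_add_of_mem_hillEigenspace hz
  have hy₁ : ContDiff ℝ 1 (deriv y) := hy₂.deriv'
  have hz₁ : ContDiff ℝ 1 (deriv z) := hz₂.deriv'
  have hgreen : ∫ t in (0 : ℝ)..T, ⟪deriv (deriv y) t, z t⟫_ℝ =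
      ∫ t in (0 : ℝ)..T, ⟪y t, deriv (deriv z) t⟫_ℝ := by
    rw [integral_inner_deriv_left hσ hy₁ (hz₂.of_le one_le_two) (deriv_add_eq_smul_deriv hy_per)
      hz_per, integral_inner_deriv_left hσ (hy₂.of_le one_le_two) hz₁ hy_per
      (deriv_add_eq_smul_deriv hz_per), neg_neg]
  have hpointwise (t : ℝ) : ⟪y t, deriv (deriv z) t⟫_ℝ - ⟪deriv (deriv y) t, z t⟫_ℝ =
      (μ - ν) * ⟪y t, z t⟫_ℝ := by
    have hAt : ⟪A t (y t), z t⟫_ℝ = ⟪y t, A t (z t)⟫_ℝ := by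
      rw [real_inner_eq_re_inner ℂ, real_inner_eq_re_inner ℂ, hsymm t]
    rw [deriv_deriv_of_mem_hillEigenspace hy, deriv_deriv_of_mem_hillEigenspace hz]
    simp only [inner_neg_left, inner_neg_right, inner_add_left, inner_add_right,
      real_inner_smul_left, real_inner_smul_right, hAt]
    ring
  have hmul : (μ - ν) * ∫ t in (0 : ℝ)..T, ⟪y t, z t⟫_ℝ = 0 := by
    rw [← intervalIntegral.integral_const_mul, ← funext hpointwise, intervalIntegral.integral_sub
      (Continuous.intervalIntegrable (by fun_prop) 0 T)
      (Continuous.intervalIntegrable (by fun_prop) 0 T), hgreen, sub_self]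
  exact (mul_eq_zero.1 hmul).resolve_left (sub_ne_zero.2 hμν)

variable {ι : Type*} {s : Finset ι} {μ : ι → ℝ} {y : ι → ℝ → E}

theorem integral_inner_sum_of_mem_hillEigenspace (hσ : ‖σ‖ = 1)
    (hsymm : ∀ t, (A t).IsSymmetric) (hμ : Function.Injective μ)
    (hy : ∀ i ∈ s, y i ∈ hillEigenspace A T σ (μ i)) {i : ι} (hi : i ∈ s) :
    ∫ t in (0 : ℝ)..T, ⟪(∑ j ∈ s, y j) t, y i t⟫_ℝ = ∫ t in (0 : ℝ)..T, ‖y i t‖ ^ 2 := by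
  have hcont : ∀ j ∈ s, Continuous (y j) := fun j hj =>
    (contDiff_of_mem_hillEigenspace (hy j hj)).continuous
  simp only [Finset.sum_apply, sum_inner]
  rw [intervalIntegral.integral_finsetSum fun j hj =>
      ((hcont j hj).inner (hcont i hi)).intervalIntegrable 0 T,
    Finset.sum_eq_single_of_mem i hi fun j hj hji =>
      integral_inner_eq_zero_of_mem_hillEigenspace hσ hsymm (hμ.ne hji) (hy j hj) (hy i hi)]
  simp only [real_inner_self_eq_norm_sq]

theorem neg_inner_deriv_deriv_sum_le_of_mem_hillEigenspace {c : ℝ}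
    (hc : ∀ t x, ⟪x, A t x⟫_ℝ ≤ c * ‖x‖ ^ 2) (hy : ∀ i ∈ s, y i ∈ hillEigenspace A T σ (μ i))
    (t : ℝ) : -⟪(∑ i ∈ s, y i) t, deriv (deriv (∑ i ∈ s, y i)) t⟫_ℝ ≤
      c * ‖(∑ i ∈ s, y i) t‖ ^ 2 + ∑ i ∈ s, μ i * ⟪(∑ i ∈ s, y i) t, y i t⟫_ℝ := by
  rw [deriv_deriv_sum_of_mem_hillEigenspace hy, inner_neg_right, inner_add_right, inner_sum,
    neg_neg]
  simp only [real_inner_smul_right]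
  gcongr
  exact hc t _

theorem integral_norm_deriv_sq_le_of_mem_hillEigenspace (hT : 0 ≤ T) (hσ : ‖σ‖ = 1)
    (hsymm : ∀ t, (A t).IsSymmetric) {c : ℝ} (hc : ∀ t x, ⟪x, A t x⟫_ℝ ≤ c * ‖x‖ ^ 2)
    (hμ : Function.Injective μ) (hy : ∀ i ∈ s, y i ∈ hillEigenspace A T σ (μ i)) :
    ∫ t in (0 : ℝ)..T, ‖deriv (∑ i ∈ s, y i) t‖ ^ 2 ≤
      c * (∫ t in (0 : ℝ)..T, ‖(∑ i ∈ s, y i) t‖ ^ 2) +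
        ∑ i ∈ s, μ i * ∫ t in (0 : ℝ)..T, ‖y i t‖ ^ 2 := by
  have hy' : ∀ i ∈ s, Continuous (y i) := fun i hi =>
    (contDiff_of_mem_hillEigenspace (hy i hi)).continuous
  have hu₂ := contDiff_sum_of_mem_hillEigenspace hy
  have hu_per := sum_apply_add_of_mem_hillEigenspace hy
  have hpointwise (t : ℝ) := neg_inner_deriv_deriv_sum_le_of_mem_hillEigenspace hc hy t
  set u := ∑ i ∈ s, y i
  have hu₁ : ContDiff ℝ 1 (deriv u) := hu₂.deriv'
  have hterm : ∀ i ∈ s, Continuous fun t => μ i * ⟪u t, y i t⟫_ℝ := fun i hi => by fun_prop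
  calc ∫ t in (0 : ℝ)..T, ‖deriv u t‖ ^ 2
      = ∫ t in (0 : ℝ)..T, -⟪u t, deriv (deriv u) t⟫_ℝ := by
        rw [intervalIntegral.integral_neg, ← integral_inner_deriv_left hσ
          (hu₂.of_le one_le_two) hu₁ hu_per (deriv_add_eq_smul_deriv hu_per)]
        simp only [real_inner_self_eq_norm_sq]
    _ ≤ ∫ t in (0 : ℝ)..T, (c * ‖u t‖ ^ 2 + ∑ i ∈ s, μ i * ⟪u t, y i t⟫_ℝ) :=
        intervalIntegral.integral_mono_on hT (Continuous.intervalIntegrable (by fun_prop) 0 T)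
          (Continuous.intervalIntegrable (by fun_prop) 0 T) fun t _ => hpointwise t
    _ = c * (∫ t in (0 : ℝ)..T, ‖u t‖ ^ 2) +
          ∑ i ∈ s, μ i * ∫ t in (0 : ℝ)..T, ‖y i t‖ ^ 2 := by
        rw [intervalIntegral.integral_add (Continuous.intervalIntegrable (by fun_prop) 0 T)
          (Continuous.intervalIntegrable (by fun_prop) 0 T), intervalIntegral.integral_const_mul,
          intervalIntegral.integral_finsetSum fun i hi => (hterm i hi).intervalIntegrable 0 T]
        congr 1
        refine Finset.sum_congr rfl fun i hi => ?_
        rw [intervalIntegral.integral_const_mul,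
          integral_inner_sum_of_mem_hillEigenspace hσ hsymm hμ hy hi]

theorem eq_zero_of_sum_eq_zero_on_grid (hT : 0 < T) (hσ : ‖σ‖ = 1)
    (hsymm : ∀ t, (A t).IsSymmetric) {c : ℝ} (hc : ∀ t x, ⟪x, A t x⟫_ℝ ≤ c * ‖x‖ ^ 2)
    {h : ℝ} (hh : 0 < h) (hch : 4 * h ^ 2 * c ≤ 1) {M : ℕ} (hM : M * h = T)
    (hμ : Function.Injective μ) (hμ_neg : ∀ i, μ i < 0)
    (hy : ∀ i ∈ s, y i ∈ hillEigenspace A T σ (μ i))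
    (hgrid : ∀ j < M, (∑ i ∈ s, y i) (j * h) = 0) : ∀ i ∈ s, y i = 0 := by
  have hpoincare := integral_norm_sq_le_of_eq_zero_on_grid
    ((contDiff_sum_of_mem_hillEigenspace hy).of_le one_le_two) hh.le hgrid
  rw [hM] at hpoincare
  have henergy := integral_norm_deriv_sq_le_of_mem_hillEigenspace hT.le hσ hsymm hc hμ hy
  set u := ∑ i ∈ s, y i
  have hu_nonneg : 0 ≤ ∫ t in (0 : ℝ)..T, ‖u t‖ ^ 2 :=
    intervalIntegral.integral_nonneg hT.le fun t _ => sq_nonneg _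
  have hsum_nonneg : 0 ≤ ∑ i ∈ s, μ i * ∫ t in (0 : ℝ)..T, ‖y i t‖ ^ 2 := by
    have hscaled := mul_le_mul_of_nonneg_left henergy (by positivity : 0 ≤ 4 * h ^ 2)
    have habsorb := mul_le_mul_of_nonneg_right hch hu_nonneg
    refine nonneg_of_mul_nonneg_right ?_ (by positivity : 0 < 4 * h ^ 2)
    linarith
  have hterm_nonpos : ∀ i ∈ s, μ i * (∫ t in (0 : ℝ)..T, ‖y i t‖ ^ 2) ≤ 0 := fun i _ =>
    mul_nonpos_of_nonpos_of_nonneg (hμ_neg i).le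
      (intervalIntegral.integral_nonneg hT.le fun t _ => sq_nonneg _)
  have hterm_zero := (Finset.sum_eq_zero_iff_of_nonpos hterm_nonpos).1
    ((Finset.sum_nonpos hterm_nonpos).antisymm hsum_nonneg)
  exact fun i hi => eq_zero_of_integral_norm_sq_eq_zero hT hσ
    (contDiff_of_mem_hillEigenspace (hy i hi)).continuous
    (apply_add_of_mem_hillEigenspace (hy i hi))
    ((mul_eq_zero.1 (hterm_zero i hi)).resolve_left (hμ_neg i).ne)

end Energy

section Finiteness

variable {E : Type*} [NormedAddCommGroup E] [InnerProductSpace ℂ E] {A : ℝ → E →ₗ[ℂ] E} {T : ℝ}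
  {σ : ℂ} {c : ℝ}

/-- Sampling a function at the grid points `0, h, …, (M - 1) h`, the map that makes the space of
negative eigenfunctions finite-dimensional. -/
def gridEval (E : Type*) [AddCommGroup E] [Module ℂ E] (h : ℝ) (M : ℕ) :
    (ℝ → E) →ₗ[ℂ] (Fin M → E) :=
  LinearMap.funLeft ℂ E fun j => j * h

theorem exists_grid_spacing (hT : 0 < T) (c : ℝ) :
    ∃ (M : ℕ) (h : ℝ), 0 < h ∧ M * h = T ∧ 4 * h ^ 2 * c ≤ 1 := by
  obtain ⟨n, hn⟩ := exists_nat_ge (4 * T ^ 2 * c)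
  have hpos : (0 : ℝ) < n + 1 := n.cast_add_one_pos
  refine ⟨n + 1, T / (n + 1), div_pos hT hpos, by push_cast; field_simp, ?_⟩
  rw [div_pow, ← mul_div_assoc, div_mul_eq_mul_div, div_le_one (by positivity)]
  nlinarith [n.cast_nonneg (α := ℝ)]

theorem exists_gridEval_separating_hillEigenspace (hT : 0 < T) (hσ : ‖σ‖ = 1)
    (hsymm : ∀ t, (A t).IsSymmetric) (hc : ∀ t x, ⟪x, A t x⟫_ℝ ≤ c * ‖x‖ ^ 2) :
    ∃ (h : ℝ) (M : ℕ), ∀ (s : Finset (Set.Iio (0 : ℝ))) (y : Set.Iio (0 : ℝ) → ℝ → E),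
      (∀ μ ∈ s, y μ ∈ hillEigenspace A T σ μ) → gridEval E h M (∑ μ ∈ s, y μ) = 0 →
        ∀ μ ∈ s, y μ = 0 := by
  obtain ⟨M, h, hh, hM, hch⟩ := exists_grid_spacing hT c
  refine ⟨h, M, fun s y hy hgrid => ?_⟩
  exact eq_zero_of_sum_eq_zero_on_grid hT hσ hsymm hc hh hch hM Subtype.val_injective
    (fun μ => μ.2) hy fun j hj => congrFun hgrid ⟨j, hj⟩

variable [FiniteDimensional ℂ E]

theorem finite_hillEigenspace_ne_bot (hT : 0 < T) (hσ : ‖σ‖ = 1)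
    (hsymm : ∀ t, (A t).IsSymmetric) (hc : ∀ t x, ⟪x, A t x⟫_ℝ ≤ c * ‖x‖ ^ 2) :
    {μ : Set.Iio (0 : ℝ) | hillEigenspace A T σ μ ≠ ⊥}.Finite := by
  obtain ⟨h, M, hsep⟩ := exists_gridEval_separating_hillEigenspace hT hσ hsymm hc
  exact finite_ne_bot_of_sum_map_eq_zero_imp_eq_zero (gridEval E h M) hsep

theorem finiteDimensional_hillEigenspace (hT : 0 < T) (hσ : ‖σ‖ = 1)
    (hsymm : ∀ t, (A t).IsSymmetric) (hc : ∀ t x, ⟪x, A t x⟫_ℝ ≤ c * ‖x‖ ^ 2)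
    (μ : Set.Iio (0 : ℝ)) : FiniteDimensional ℂ (hillEigenspace A T σ μ) := by
  obtain ⟨h, M, hsep⟩ := exists_gridEval_separating_hillEigenspace hT hσ hsymm hc
  refine FiniteDimensional.of_injective ((gridEval E h M).domRestrict (hillEigenspace A T σ μ))
    ((injective_iff_map_eq_zero _).2 fun y hy => Subtype.ext ?_)
  exact hsep {μ} (fun _ => y) (by simp) (by simpa using hy) μ (by simp)

theorem negCount_iteration_general (hT : 0 < T) (hsymm : ∀ t, (A t).IsSymmetric)
    (hc : ∀ t x, ⟪x, A t x⟫_ℝ ≤ c * ‖x‖ ^ 2) (hA : ∀ t, A (t + T) = A t) {k : ℕ} (hk : 0 < k)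
    {θ : ℂ} (hθ : ‖θ‖ = 1) :
    hillNegCount A (k * T) θ =
      ∑ σ ∈ ((X : ℂ[X]) ^ k - C θ).roots.toFinset, hillNegCount A T σ := by
  have hroot : ∀ σ ∈ ((X : ℂ[X]) ^ k - C θ).roots.toFinset, ‖σ‖ = 1 := fun σ hσ => by
    have hpow : σ ^ k = θ := by
      simpa [sub_eq_zero] using (mem_roots'.1 (Multiset.mem_toFinset.1 hσ)).2
    rwa [← hpow, norm_pow, pow_eq_one_iff_of_nonneg (norm_nonneg σ) hk.ne'] at hθ
  have hkT : 0 < k * T := by positivity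
  simp only [hillNegCount_eq_finsum_Iio]
  rw [← finsum_sum_comm _ _ fun σ hσ => ?_]
  · refine finsum_congr fun μ => ?_
    have := finiteDimensional_hillEigenspace hkT hθ hsymm hc μ
    exact finrank_hillEigenspace_natCast_mul hA hk.ne' (norm_ne_zero_iff.1 (hθ ▸ one_ne_zero))
  · refine (finite_hillEigenspace_ne_bot hT (hroot σ hσ) hsymm hc).subset fun μ hμ hbot => hμ ?_
    change finrank ℂ (hillEigenspace A T σ μ) = 0
    rw [hbot, finrank_bot]

end Finiteness

section Matrix

open Matrix

variable {N : ℕ}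

/-- The complex-linear operator on the Hermitian space `ℂᴺ` with the given real matrix. -/
noncomputable def complexification (A : Matrix (Fin N) (Fin N) ℝ) :
    EuclideanSpace ℂ (Fin N) →ₗ[ℂ] EuclideanSpace ℂ (Fin N) :=
  Matrix.toEuclideanLin (A.map Complex.ofReal)

theorem isSymmetric_complexification {A : Matrix (Fin N) (Fin N) ℝ} (hA : A.IsSymm) :
    (complexification A).IsSymmetric := by
  rw [complexification, Matrix.isSymmetric_toEuclideanLin_iff]
  ext i j
  simp [hA.apply i j]

/-- Pointwise identification of functions into `Fin N → ℂ`, which carries the sup norm, with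
functions into the Hermitian space `ℂᴺ`, where symmetric matrices act as symmetric operators. -/
noncomputable def toEuclideanFun (N : ℕ) :
    (ℝ → Fin N → ℂ) ≃ₗ[ℂ] (ℝ → EuclideanSpace ℂ (Fin N)) :=
  LinearEquiv.piCongrRight fun _ => (WithLp.linearEquiv 2 ℂ (Fin N → ℂ)).symm

theorem toEuclideanFun_mem_hillEigenspace_iff {A : ℝ → Matrix (Fin N) (Fin N) ℝ} {T : ℝ} {σ : ℂ}
    {μ : ℝ} {y : ℝ → Fin N → ℂ} :
    toEuclideanFun N y ∈ hillEigenspace (fun t => complexification (A t)) T σ μ ↔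
      y ∈ twistedEigSet N A T σ μ := by
  let e : (Fin N → ℂ) ≃L[ℝ] EuclideanSpace ℂ (Fin N) :=
    (PiLp.continuousLinearEquiv 2 ℝ fun _ => ℂ).symm
  have hcomp (u : ℝ → Fin N → ℂ) : toEuclideanFun N u = e ∘ u := rfl
  have hderiv (u : ℝ → Fin N → ℂ) : deriv (e ∘ u) = e ∘ deriv u := by
    ext1 t
    exact congrArg (· 1) (e.comp_fderiv (f := u) (x := t))
  rw [mem_hillEigenspace_iff, hcomp, e.comp_contDiff_iff, hderiv, hderiv]
  refine and_congr_right fun _ => and_congr ?_ ?_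
  · exact forall_congr' fun t => e.injective.eq_iff
  · exact forall_congr' fun t => e.injective.eq_iff

theorem twistedEigSpace_eq_comap_hillEigenspace (A : ℝ → Matrix (Fin N) (Fin N) ℝ) (T : ℝ) (σ : ℂ)
    (μ : ℝ) : twistedEigSpace N A T σ μ =
      (hillEigenspace (fun t => complexification (A t)) T σ μ).comap
        (toEuclideanFun N).toLinearMap := by
  rw [twistedEigSpace]
  convert Submodule.span_eq _
  ext y
  exact toEuclideanFun_mem_hillEigenspace_iff.symm

theorem finrank_twistedEigSpace (A : ℝ → Matrix (Fin N) (Fin N) ℝ) (T : ℝ) (σ : ℂ) (μ : ℝ) :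
    finrank ℂ (twistedEigSpace N A T σ μ) =
      finrank ℂ (hillEigenspace (fun t => complexification (A t)) T σ μ) := by
  rw [twistedEigSpace_eq_comap_hillEigenspace, Submodule.comap_equiv_eq_map_symm]
  exact LinearEquiv.finrank_map_eq _ _

theorem twistedNegCount_eq_hillNegCount (A : ℝ → Matrix (Fin N) (Fin N) ℝ) (T : ℝ) (σ : ℂ) :
    twistedNegCount N A T σ = hillNegCount (fun t => complexification (A t)) T σ := by
  simp only [twistedNegCount, hillNegCount, finrank_twistedEigSpace]

theorem exists_inner_complexification_le {A : ℝ → Matrix (Fin N) (Fin N) ℝ} {T : ℝ} (hT : T ≠ 0)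
    (hA : ∀ i j, Continuous fun t => A t i j) (hper : ∀ t, A (t + T) = A t) :
    ∃ c : ℝ, ∀ t x, ⟪x, complexification (A t) x⟫_ℝ ≤ c * ‖x‖ ^ 2 := by
  let Φ : Matrix (Fin N) (Fin N) ℂ →ₗ[ℂ]
      (EuclideanSpace ℂ (Fin N) →L[ℂ] EuclideanSpace ℂ (Fin N)) :=
    (Matrix.toEuclideanLin.trans LinearMap.toContinuousLinearMap).toLinearMap
  let L := fun t => Φ ((A t).map Complex.ofReal)
  have hL : Continuous L := Φ.continuous_of_finiteDimensional.comp <|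
    continuous_matrix fun i j => Complex.continuous_ofReal.comp (hA i j)
  have hLper : Function.Periodic L T := fun t => by simp only [L, hper]
  obtain ⟨c, hc⟩ := (hLper.isBounded_of_continuous hT hL).exists_norm_le
  refine ⟨c, fun t x => ?_⟩
  calc ⟪x, complexification (A t) x⟫_ℝ ≤ ‖x‖ * ‖L t x‖ := real_inner_le_norm x (L t x)
    _ ≤ ‖x‖ * (c * ‖x‖) := by
        gcongr
        exact (L t).le_of_opNorm_le (hc _ ⟨t, rfl⟩) x
    _ = c * ‖x‖ ^ 2 := by ring

end Matrix

open Polynomial in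
/-- Bott's iteration formula
`j(kT₀, θ) = Σ_{σ^k = θ} j(T₀, σ)`, the sum running over the `k` distinct `k`-th
roots of `θ`. -/
theorem negCount_iteration (N : ℕ) (A : ℝ → Matrix (Fin N) (Fin N) ℝ)
    (hA : ∀ i j, Continuous fun t => A t i j)
    (hsymm : ∀ t, (A t).IsSymm) (T₀ : ℝ) (hT₀ : 0 < T₀)
    (hAper : ∀ t, A (t + T₀) = A t)
    (k : ℕ) (hk : 0 < k) (θ : ℂ) (hθ : ‖θ‖ = 1) :
    twistedNegCount N A (k * T₀) θ =
      ∑ σ ∈ ((X : ℂ[X]) ^ k - C θ).roots.toFinset, twistedNegCount N A T₀ σ := by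
  obtain ⟨c, hc⟩ := exists_inner_complexification_le hT₀.ne' hA hAper
  simp only [twistedNegCount_eq_hillNegCount]
  exact negCount_iteration_general hT₀ (fun t => isSymmetric_complexification (hsymm t)) hc
    (fun t => congrArg complexification (hAper t)) hk hθ
end

section
/- Assume equation ẍ + V'_x(t,x) = 0 is non-resonant (every periodic solution is non-degenerate as a critical point of the action). Then for every ρ = k₁/(k₂T₀) with k₁, k₂ coprime, the number of fundamental solutions (periodic solutions in C²_{k₁,k₂T₀}) is finite, even, and positive: it equals 2r for some integer r ≥ 1. -/
/-- The set of fundamental solutions: `C²` solutions of `ẍ + V'_x(t,x) = 0` making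
`k₁` windings in time `k₂T₀`. -/
def fundSolutions (V : ℝ → ℝ → ℝ) (T₀ : ℝ) (k₁ : ℤ) (k₂ : ℕ) : Set (ℝ → ℝ) :=
  {x | ContDiff ℝ 2 x ∧ (∀ t, deriv (deriv x) t + deriv (V t) (x t) = 0) ∧
    ∀ t, x (t + k₂ * T₀) = x t + k₁}

/-- Identification modulo integer shifts (i.e. as curves in `S¹ = ℝ/ℤ`). -/
def fundSetoid (V : ℝ → ℝ → ℝ) (T₀ : ℝ) (k₁ : ℤ) (k₂ : ℕ) :
    Setoid (fundSolutions V T₀ k₁ k₂) where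
  r x y := ∃ m : ℤ, ∀ t, (y : ℝ → ℝ) t = (x : ℝ → ℝ) t + m
  iseqv := by
    constructor
    · exact fun x => ⟨0, by simp⟩
    · rintro x y ⟨m, hm⟩
      exact ⟨-m, fun t => by rw [hm t]; push_cast; ring⟩
    · rintro x y z ⟨m, hm⟩ ⟨m', hm'⟩
      exact ⟨m + m', fun t => by rw [hm' t, hm t]; push_cast; ring⟩

/-!
Fundamental solutions modulo integer shifts are the zeros, counted in one period of position, of
the shooting map `p ↦ φ_T(p) - p - (k₁, 0)` on phase space, where `T = k₂ T₀` and `φ_T` is the time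
`T` flow. Non-resonance says that these zeros are nondegenerate.

*Parity.* For a planar map with nondegenerate zeros in a box, the parity of the number of zeros is
the parity of the winding number along the boundary of the box, i.e. the sign picked up by a
continuous square root of the map along the boundary. Since the force is bounded, the position
component of the shooting map is negative at large negative velocity and positive at large positive
velocity, so the horizontal edges contribute no sign; by periodicity in position, the contributions
of the vertical edges cancel. Hence the number of zeros is even.

*Existence.* The discretised action is coercive modulo integer shifts, so it has minimisers. They
are orbits of the symplectic Euler scheme, which converge to a solution as the time step tends
to `0`. This replaces the infinite-dimensional Morse theory of the loop space.
-/

section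

open Set Filter Topology
open scoped NNReal

/-! ### Winding parity and nondegenerate zeros -/

section SquareRoot

variable {X Y : Type*} [TopologicalSpace X] [TopologicalSpace Y]

/-- `r` is a continuous square root of `g` on `s`. -/
structure IsSqrtOn (r g : X → ℂ) (s : Set X) : Prop where
  continuousOn : ContinuousOn r s
  sq_eq : ∀ x ∈ s, r x ^ 2 = g x

namespace IsSqrtOn

variable {r r' g g' : X → ℂ} {s : Set X}

theorem ne_zero (h : IsSqrtOn r g s) (hg : ∀ x ∈ s, g x ≠ 0) : ∀ x ∈ s, r x ≠ 0 := by
  intro x hx h0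
  exact hg x hx (by rw [← h.sq_eq x hx, h0, zero_pow two_ne_zero])

theorem mul (h : IsSqrtOn r g s) (h' : IsSqrtOn r' g' s) :
    IsSqrtOn (fun x ↦ r x * r' x) (fun x ↦ g x * g' x) s :=
  ⟨h.continuousOn.mul h'.continuousOn, fun x hx ↦ by rw [mul_pow, h.sq_eq x hx, h'.sq_eq x hx]⟩

theorem comp (h : IsSqrtOn r g s) {φ : Y → X} {t : Set Y} (hφ : ContinuousOn φ t)
    (hst : MapsTo φ t s) : IsSqrtOn (r ∘ φ) (g ∘ φ) t :=
  ⟨h.continuousOn.comp hφ hst, fun y hy ↦ h.sq_eq (φ y) (hst hy)⟩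

theorem mono (h : IsSqrtOn r g s) {t : Set X} (hts : t ⊆ s) : IsSqrtOn r g t :=
  h.comp continuousOn_id hts

theorem congr (h : IsSqrtOn r g s) (hg : EqOn g g' s) : IsSqrtOn r g' s :=
  ⟨h.continuousOn, fun x hx ↦ (h.sq_eq x hx).trans (hg hx)⟩

end IsSqrtOn

theorem isSqrtOn_exp_log_div_two {g : X → ℂ} {s : Set X} (hg : ContinuousOn g s)
    (hs : MapsTo g s Complex.slitPlane) :
    IsSqrtOn (fun x ↦ Complex.exp (Complex.log (g x) / 2)) g s where
  continuousOn := ((hg.clog hs).div_const 2).cexp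
  sq_eq x hx := by
    rw [← Complex.exp_nat_mul, Nat.cast_ofNat, mul_div_cancel₀ _ two_ne_zero,
      Complex.exp_log (Complex.slitPlane_ne_zero (hs hx))]

instance [Lattice X] [Lattice Y] [TopologicalLattice X] [TopologicalLattice Y] :
    TopologicalLattice (X × Y) where
  continuous_inf := .prodMk
    (continuous_fst.fst.inf continuous_snd.fst)
    (continuous_fst.snd.inf continuous_snd.snd)
  continuous_sup := .prodMk
    (continuous_fst.fst.sup continuous_snd.fst)
    (continuous_fst.snd.sup continuous_snd.snd)

theorem exists_isSqrtOn_Icc {E : Type*} [AddCommGroup E] [Module ℝ E] [TopologicalSpace E]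
    [ContinuousAdd E] [ContinuousSMul ℝ E] [LocallyPathConnectedSpace E] [Lattice E]
    [TopologicalLattice E] {a b : E} (hab : a ≤ b) {g : E → ℂ} (hg : ContinuousOn g (Icc a b))
    (hg0 : ∀ x ∈ Icc a b, g x ≠ 0) : ∃ r, IsSqrtOn r g (Icc a b) := by
  have hsc : IsSimplyConnected (univ : Set E) :=
    have := (convex_univ (𝕜 := ℝ) (E := E)).contractibleSpace univ_nonempty
    SimplyConnectedSpace.ofContractible _
  -- `x ↦ a ⊔ (b ⊓ x)` retracts the simply connected space `E` onto `Icc a b`.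
  have hmem (x : E) : a ⊔ (b ⊓ x) ∈ Icc a b := ⟨le_sup_left, sup_le hab inf_le_left⟩
  obtain ⟨r, hr, hr2⟩ := Complex.exists_continuousOn_pow_eq hsc isOpen_univ
    (g := fun x ↦ g (a ⊔ (b ⊓ x)))
    (hg.comp_continuous (by fun_prop) hmem).continuousOn
    (by rintro ⟨x, -, hx⟩; exact hg0 _ (hmem x) hx) two_ne_zero
  refine ⟨r, hr.mono (subset_univ _), fun x hx ↦ ?_⟩
  rw [hr2, inf_eq_right.2 hx.2, sup_eq_right.2 hx.1]

end SquareRoot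

section SqrtRatio

variable {g : ℝ → ℂ} {a b : ℝ}

/-- The monodromy `r b / r a` of a continuous square root `r` of `g` along `[a, b]`; it does not
depend on the choice of `r`, and is set to `1` if there is none. -/
noncomputable def sqrtRatio (g : ℝ → ℂ) (a b : ℝ) : ℂ :=
  open Classical in if h : ∃ r, IsSqrtOn r g (Icc a b) then h.choose b / h.choose a else 1

theorem IsSqrtOn.sqrtRatio_eq {r : ℝ → ℂ} (hr : IsSqrtOn r g (Icc a b)) (hab : a ≤ b)
    (hg0 : ∀ t ∈ Icc a b, g t ≠ 0) : sqrtRatio g a b = r b / r a := by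
  have h : ∃ r, IsSqrtOn r g (Icc a b) := ⟨r, hr⟩
  rw [sqrtRatio, dif_pos h]
  have ha : a ∈ Icc a b := left_mem_Icc.2 hab
  have hb : b ∈ Icc a b := right_mem_Icc.2 hab
  rcases isPreconnected_Icc.eq_or_eq_neg_of_sq_eq h.choose_spec.continuousOn hr.continuousOn
    (fun t ht ↦ (h.choose_spec.sq_eq t ht).trans (hr.sq_eq t ht).symm)
    (fun {t} ↦ hr.ne_zero hg0 t) with heq | heq
  · rw [heq ha, heq hb]
  · rw [heq ha, heq hb, Pi.neg_apply, Pi.neg_apply, neg_div_neg_eq]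

theorem sqrtRatio_sq (hab : a ≤ b) (hg : ContinuousOn g (Icc a b))
    (hg0 : ∀ t ∈ Icc a b, g t ≠ 0) : sqrtRatio g a b ^ 2 = g b / g a := by
  obtain ⟨r, hr⟩ := exists_isSqrtOn_Icc hab hg hg0
  rw [hr.sqrtRatio_eq hab hg0, div_pow, hr.sq_eq a (left_mem_Icc.2 hab),
    hr.sq_eq b (right_mem_Icc.2 hab)]

theorem sqrtRatio_ne_zero (hab : a ≤ b) (hg : ContinuousOn g (Icc a b))
    (hg0 : ∀ t ∈ Icc a b, g t ≠ 0) : sqrtRatio g a b ≠ 0 := by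
  intro h
  have hsq := sqrtRatio_sq hab hg hg0
  rw [h, zero_pow two_ne_zero, eq_comm] at hsq
  exact div_ne_zero (hg0 b (right_mem_Icc.2 hab)) (hg0 a (left_mem_Icc.2 hab)) hsq

theorem sqrtRatio_mul_sqrtRatio {m : ℝ} (ham : a ≤ m) (hmb : m ≤ b)
    (hg : ContinuousOn g (Icc a b)) (hg0 : ∀ t ∈ Icc a b, g t ≠ 0) :
    sqrtRatio g a m * sqrtRatio g m b = sqrtRatio g a b := by
  have hab := ham.trans hmb
  obtain ⟨r, hr⟩ := exists_isSqrtOn_Icc hab hg hg0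
  have hl : Icc a m ⊆ Icc a b := Icc_subset_Icc_right hmb
  have hr' : Icc m b ⊆ Icc a b := Icc_subset_Icc_left ham
  rw [hr.sqrtRatio_eq hab hg0, (hr.mono hl).sqrtRatio_eq ham fun t ht ↦ hg0 t (hl ht),
    (hr.mono hr').sqrtRatio_eq hmb fun t ht ↦ hg0 t (hr' ht), mul_comm,
    div_mul_div_cancel₀ (hr.ne_zero hg0 m ⟨ham, hmb⟩)]

theorem sqrtRatio_eq_mul {f u : ℝ → ℂ} (hab : a ≤ b) (hg : ContinuousOn g (Icc a b))
    (hf0 : ∀ t ∈ Icc a b, f t ≠ 0) (hg0 : ∀ t ∈ Icc a b, g t ≠ 0)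
    (hu : IsSqrtOn u (fun t ↦ f t / g t) (Icc a b)) :
    sqrtRatio f a b = u b / u a * sqrtRatio g a b := by
  obtain ⟨r, hr⟩ := exists_isSqrtOn_Icc hab hg hg0
  have hur : IsSqrtOn (fun t ↦ u t * r t) f (Icc a b) :=
    (hu.mul hr).congr fun t ht ↦ div_mul_cancel₀ _ (hg0 t ht)
  rw [hur.sqrtRatio_eq hab hf0, hr.sqrtRatio_eq hab hg0, div_mul_div_comm]

theorem sqrtRatio_neg (hab : a ≤ b) (hg : ContinuousOn g (Icc a b))
    (hg0 : ∀ t ∈ Icc a b, g t ≠ 0) : sqrtRatio (fun t ↦ -g t) a b = sqrtRatio g a b := by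
  rw [sqrtRatio_eq_mul (u := fun _ ↦ Complex.I) hab hg (fun t ht ↦ neg_ne_zero.2 (hg0 t ht)) hg0
    ⟨continuousOn_const, fun t ht ↦ by rw [Complex.I_sq, neg_div, div_self (hg0 t ht)]⟩,
    div_self Complex.I_ne_zero, one_mul]

theorem sqrtRatio_reflect (hab : a ≤ b) (hg : ContinuousOn g (Icc a b))
    (hg0 : ∀ t ∈ Icc a b, g t ≠ 0) :
    sqrtRatio (fun t ↦ g (a + b - t)) a b = (sqrtRatio g a b)⁻¹ := by
  obtain ⟨r, hr⟩ := exists_isSqrtOn_Icc hab hg hg0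
  have hmaps : MapsTo (fun t ↦ a + b - t) (Icc a b) (Icc a b) := fun t ht ↦
    ⟨by linarith [ht.2], by linarith [ht.1]⟩
  have hrefl : IsSqrtOn (fun t ↦ r (a + b - t)) (fun t ↦ g (a + b - t)) (Icc a b) :=
    hr.comp (by fun_prop) hmaps
  rw [hrefl.sqrtRatio_eq hab fun t ht ↦ hg0 _ (hmaps ht), hr.sqrtRatio_eq hab hg0, inv_div,
    add_sub_cancel_right, add_sub_cancel_left]

theorem sqrtRatio_eq_one_of_re_pos (hab : a ≤ b) (hg : ContinuousOn g (Icc a b))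
    (hpos : ∀ t ∈ Icc a b, 0 < (g t).re) (hper : g b = g a) : sqrtRatio g a b = 1 := by
  have hslit : MapsTo g (Icc a b) Complex.slitPlane := fun t ht ↦ Or.inl (hpos t ht)
  rw [(isSqrtOn_exp_log_div_two hg hslit).sqrtRatio_eq hab fun t ht ↦
    Complex.slitPlane_ne_zero (hslit ht), hper, div_self (Complex.exp_ne_zero _)]

theorem sqrtRatio_eq_one_of_re_neg (hab : a ≤ b) (hg : ContinuousOn g (Icc a b))
    (hneg : ∀ t ∈ Icc a b, (g t).re < 0) (hper : g b = g a) : sqrtRatio g a b = 1 := by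
  have hg0 : ∀ t ∈ Icc a b, g t ≠ 0 := fun t ht h0 ↦ (hneg t ht).ne (by rw [h0, Complex.zero_re])
  rw [← sqrtRatio_neg hab hg hg0]
  exact sqrtRatio_eq_one_of_re_pos hab hg.neg (fun t ht ↦ by simpa using hneg t ht) (by rw [hper])

end SqrtRatio

section BoxSign

variable {f g : ℝ × ℝ → ℂ} {a b c d : ℝ}

/-- The boundary of the box `[a, b] × [c, d]`. -/
def boxFrontier (a b c d : ℝ) : Set (ℝ × ℝ) := (Icc a b ×ˢ Icc c d) \ (Ioo a b ×ˢ Ioo c d)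

theorem mk_bottom_mem_boxFrontier (hcd : c ≤ d) {x : ℝ} (hx : x ∈ Icc a b) :
    (x, c) ∈ boxFrontier a b c d :=
  ⟨⟨hx, left_mem_Icc.2 hcd⟩, fun h ↦ left_notMem_Ioo h.2⟩

theorem mk_top_mem_boxFrontier (hcd : c ≤ d) {x : ℝ} (hx : x ∈ Icc a b) :
    (x, d) ∈ boxFrontier a b c d :=
  ⟨⟨hx, right_mem_Icc.2 hcd⟩, fun h ↦ right_notMem_Ioo h.2⟩

theorem mk_left_mem_boxFrontier (hab : a ≤ b) {y : ℝ} (hy : y ∈ Icc c d) :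
    (a, y) ∈ boxFrontier a b c d :=
  ⟨⟨left_mem_Icc.2 hab, hy⟩, fun h ↦ left_notMem_Ioo h.1⟩

theorem mk_right_mem_boxFrontier (hab : a ≤ b) {y : ℝ} (hy : y ∈ Icc c d) :
    (b, y) ∈ boxFrontier a b c d :=
  ⟨⟨right_mem_Icc.2 hab, hy⟩, fun h ↦ right_notMem_Ioo h.1⟩

theorem swap_mem_boxFrontier {p : ℝ × ℝ} :
    p.swap ∈ boxFrontier a b c d ↔ p ∈ boxFrontier c d a b := by
  simp only [boxFrontier, Set.mem_sdiff, mem_prod, Prod.fst_swap, Prod.snd_swap, and_comm]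

/-- The monodromy of the square root of `f` along the boundary of the box `[a, b] × [c, d]`, i.e.
`(-1) ^ w` where `w` is the winding number of `f` along that boundary. -/
noncomputable def boxSign (f : ℝ × ℝ → ℂ) (a b c d : ℝ) : ℂ :=
  sqrtRatio (fun x ↦ f (x, c)) a b * sqrtRatio (fun y ↦ f (b, y)) c d /
    (sqrtRatio (fun x ↦ f (x, d)) a b * sqrtRatio (fun y ↦ f (a, y)) c d)

theorem boxSign_comp_swap (f : ℝ × ℝ → ℂ) (a b c d : ℝ) :
    boxSign (f ∘ Prod.swap) c d a b = (boxSign f a b c d)⁻¹ := by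
  simp only [boxSign, Function.comp_apply, Prod.swap_prod_mk, inv_div, mul_comm]

theorem boxSign_congr_of_isSqrtOn_div (hab : a ≤ b) (hcd : c ≤ d) (hg : Continuous g)
    (hf0 : ∀ p ∈ boxFrontier a b c d, f p ≠ 0) (hg0 : ∀ p ∈ boxFrontier a b c d, g p ≠ 0)
    {u : ℝ × ℝ → ℂ} (hu : IsSqrtOn u (fun p ↦ f p / g p) (boxFrontier a b c d)) :
    boxSign f a b c d = boxSign g a b c d := by
  have edge {γ : ℝ → ℝ × ℝ} (hγ : Continuous γ) {s t : ℝ} (hst : s ≤ t)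
      (hmem : ∀ x ∈ Icc s t, γ x ∈ boxFrontier a b c d) :
      sqrtRatio (fun x ↦ f (γ x)) s t = u (γ t) / u (γ s) * sqrtRatio (fun x ↦ g (γ x)) s t :=
    sqrtRatio_eq_mul hst (hg.comp hγ).continuousOn (fun x hx ↦ hf0 _ (hmem x hx))
      (fun x hx ↦ hg0 _ (hmem x hx)) (hu.comp hγ.continuousOn hmem)
  have hu0 := hu.ne_zero fun p hp ↦ div_ne_zero (hf0 p hp) (hg0 p hp)
  have hac := hu0 _ (mk_bottom_mem_boxFrontier hcd (left_mem_Icc.2 hab))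
  have hbc := hu0 _ (mk_bottom_mem_boxFrontier hcd (right_mem_Icc.2 hab))
  have had := hu0 _ (mk_top_mem_boxFrontier hcd (left_mem_Icc.2 hab))
  have hbd := hu0 _ (mk_top_mem_boxFrontier hcd (right_mem_Icc.2 hab))
  rw [boxSign, boxSign,
    edge (γ := fun x ↦ (x, c)) (by fun_prop) hab fun _ ↦ mk_bottom_mem_boxFrontier hcd,
    edge (γ := fun x ↦ (x, d)) (by fun_prop) hab fun _ ↦ mk_top_mem_boxFrontier hcd,
    edge (γ := fun y ↦ (a, y)) (by fun_prop) hcd fun _ ↦ mk_left_mem_boxFrontier hab,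
    edge (γ := fun y ↦ (b, y)) (by fun_prop) hcd fun _ ↦ mk_right_mem_boxFrontier hab]
  field_simp

theorem boxSign_one (hab : a ≤ b) (hcd : c ≤ d) : boxSign (fun _ ↦ 1) a b c d = 1 := by
  have hone {s t : ℝ} (hst : s ≤ t) : sqrtRatio (fun _ ↦ 1) s t = 1 :=
    sqrtRatio_eq_one_of_re_pos hst continuousOn_const (by simp) rfl
  rw [boxSign, hone hab, hone hcd, mul_one, div_one]

theorem boxSign_eq_one (hab : a ≤ b) (hcd : c ≤ d) (hf : Continuous f)
    (hf0 : ∀ p ∈ Icc a b ×ˢ Icc c d, f p ≠ 0) : boxSign f a b c d = 1 := by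
  rw [Icc_prod_Icc] at hf0
  obtain ⟨r, hr⟩ := exists_isSqrtOn_Icc (Prod.mk_le_mk.2 ⟨hab, hcd⟩) hf.continuousOn hf0
  have hsub : boxFrontier a b c d ⊆ Icc (a, c) (b, d) := by
    rw [← Icc_prod_Icc]
    exact sdiff_subset
  rw [← boxSign_one hab hcd]
  exact boxSign_congr_of_isSqrtOn_div hab hcd continuous_const (fun p hp ↦ hf0 p (hsub hp))
    (fun _ _ ↦ one_ne_zero) ((hr.mono hsub).congr fun p _ ↦ (div_one (f p)).symm)

theorem boxSign_congr_of_norm_sub_lt (hab : a ≤ b) (hcd : c ≤ d) (hf : Continuous f)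
    (hg : Continuous g) (hfg : ∀ p ∈ boxFrontier a b c d, ‖f p - g p‖ < ‖g p‖) :
    boxSign f a b c d = boxSign g a b c d := by
  have hg0 : ∀ p ∈ boxFrontier a b c d, g p ≠ 0 := fun p hp ↦
    norm_pos_iff.1 ((norm_nonneg _).trans_lt (hfg p hp))
  have hf0 : ∀ p ∈ boxFrontier a b c d, f p ≠ 0 := fun p hp h0 ↦ by
    simpa [h0] using hfg p hp
  refine boxSign_congr_of_isSqrtOn_div hab hcd hg hf0 hg0 (isSqrtOn_exp_log_div_two
    (hf.continuousOn.div hg.continuousOn hg0) fun p hp ↦ ?_)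
  rw [← add_sub_cancel 1 (f p / g p), div_sub_one (hg0 p hp)]
  refine Complex.mem_slitPlane_of_norm_lt_one ?_
  rw [norm_div, div_lt_one (norm_pos_iff.2 (hg0 p hp))]
  exact hfg p hp

-- Oddness turns opposite edges into reflections of each other, so that `boxSign` is the square of
-- the monodromy along two consecutive edges, i.e. the quotient of `f` at opposite corners.
theorem boxSign_eq_neg_one_of_odd (hab : a ≤ b) (hcd : c ≤ d) (hf : Continuous f)
    (hf0 : ∀ p ∈ boxFrontier a b c d, f p ≠ 0)
    (hodd : ∀ x y, f (a + b - x, c + d - y) = -f (x, y)) : boxSign f a b c d = -1 := by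
  have hbot : ∀ x ∈ Icc a b, f (x, c) ≠ 0 := fun x hx ↦ hf0 _ (mk_bottom_mem_boxFrontier hcd hx)
  have hright : ∀ y ∈ Icc c d, f (b, y) ≠ 0 := fun y hy ↦ hf0 _ (mk_right_mem_boxFrontier hab hy)
  have hbotc : Continuous fun x ↦ f (x, c) := by fun_prop
  have hrightc : Continuous fun y ↦ f (b, y) := by fun_prop
  have htop : sqrtRatio (fun x ↦ f (x, d)) a b = (sqrtRatio (fun x ↦ f (x, c)) a b)⁻¹ := by
    rw [← sqrtRatio_reflect hab hbotc.continuousOn hbot, ← sqrtRatio_neg hab]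
    · congr! 2 with x
      rw [← hodd, add_sub_cancel_right]
    · fun_prop
    · exact fun x hx ↦ hf0 _ (mk_top_mem_boxFrontier hcd hx)
  have hleft : sqrtRatio (fun y ↦ f (a, y)) c d = (sqrtRatio (fun y ↦ f (b, y)) c d)⁻¹ := by
    rw [← sqrtRatio_reflect hcd hrightc.continuousOn hright, ← sqrtRatio_neg hcd]
    · congr! 2 with y
      rw [← hodd, add_sub_cancel_left]
    · fun_prop
    · exact fun y hy ↦ hf0 _ (mk_left_mem_boxFrontier hab hy)
  have hcorner : f (b, d) = -f (a, c) := by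
    rw [← hodd, add_sub_cancel_left, add_sub_cancel_left]
  rw [boxSign, htop, hleft, ← mul_inv, div_inv_eq_mul, ← sq, mul_pow,
    sqrtRatio_sq hab hbotc.continuousOn hbot, sqrtRatio_sq hcd hrightc.continuousOn hright,
    mul_comm, div_mul_div_cancel₀ (hbot b (right_mem_Icc.2 hab)), hcorner, neg_div,
    div_self (hbot a (left_mem_Icc.2 hab))]

theorem boxSign_mul_boxSign {m : ℝ} (ham : a ≤ m) (hmb : m ≤ b) (hcd : c ≤ d)
    (hf : Continuous f) (hf0 : ∀ p ∈ boxFrontier a b c d, f p ≠ 0)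
    (hm : ∀ y ∈ Icc c d, f (m, y) ≠ 0) :
    boxSign f a m c d * boxSign f m b c d = boxSign f a b c d := by
  have hmid := sqrtRatio_ne_zero hcd (g := fun y ↦ f (m, y)) (by fun_prop) hm
  rw [boxSign, boxSign, boxSign,
    ← sqrtRatio_mul_sqrtRatio (g := fun x ↦ f (x, c)) ham hmb (by fun_prop)
      fun x hx ↦ hf0 _ (mk_bottom_mem_boxFrontier hcd hx),
    ← sqrtRatio_mul_sqrtRatio (g := fun x ↦ f (x, d)) ham hmb (by fun_prop)
      fun x hx ↦ hf0 _ (mk_top_mem_boxFrontier hcd hx)]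
  field_simp

theorem boxSign_excision_fst {a' b' : ℝ} (ha : a ≤ a') (hab : a' ≤ b') (hb : b' ≤ b)
    (hcd : c ≤ d) (hf : Continuous f)
    (hf0 : ∀ p ∈ (Icc a b ×ˢ Icc c d) \ (Ioo a' b' ×ˢ Ioo c d), f p ≠ 0) :
    boxSign f a b c d = boxSign f a' b' c d := by
  have hout : ∀ x ∈ Icc a b, x ∉ Ioo a' b' → ∀ y ∈ Icc c d, f (x, y) ≠ 0 := fun x hx hx' y hy ↦
    hf0 (x, y) ⟨⟨hx, hy⟩, fun h ↦ hx' h.1⟩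
  have hfr : ∀ p ∈ boxFrontier a b c d, f p ≠ 0 := fun p hp ↦
    hf0 p ⟨hp.1, fun h ↦ hp.2 ⟨Ioo_subset_Ioo ha hb h.1, h.2⟩⟩
  have hfr' : ∀ p ∈ boxFrontier a' b c d, f p ≠ 0 := fun p hp ↦
    hf0 p ⟨⟨Icc_subset_Icc_left ha hp.1.1, hp.1.2⟩, fun h ↦
      hp.2 ⟨Ioo_subset_Ioo_right hb h.1, h.2⟩⟩
  have hleft : boxSign f a a' c d = 1 := boxSign_eq_one ha hcd hf fun p hp ↦
    hout p.1 ⟨hp.1.1, hp.1.2.trans (hab.trans hb)⟩ (fun h ↦ h.1.not_ge hp.1.2) p.2 hp.2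
  have hright : boxSign f b' b c d = 1 := boxSign_eq_one hb hcd hf fun p hp ↦
    hout p.1 ⟨(ha.trans hab).trans hp.1.1, hp.1.2⟩ (fun h ↦ h.2.not_ge hp.1.1) p.2 hp.2
  rw [← boxSign_mul_boxSign ha (hab.trans hb) hcd hf hfr
      (hout a' ⟨ha, hab.trans hb⟩ left_notMem_Ioo), hleft, one_mul,
    ← boxSign_mul_boxSign hab hb hcd hf hfr'
      (hout b' ⟨ha.trans hab, hb⟩ right_notMem_Ioo), hright, mul_one]

theorem boxSign_excision {a' b' c' d' : ℝ} (ha : a ≤ a') (hab : a' ≤ b') (hb : b' ≤ b)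
    (hc : c ≤ c') (hcd : c' ≤ d') (hd : d' ≤ d) (hf : Continuous f)
    (hf0 : ∀ p ∈ (Icc a b ×ˢ Icc c d) \ (Ioo a' b' ×ˢ Ioo c' d'), f p ≠ 0) :
    boxSign f a b c d = boxSign f a' b' c' d' := by
  rw [boxSign_excision_fst ha hab hb (hc.trans (hcd.trans hd)) hf fun p hp ↦
    hf0 p ⟨hp.1, fun h ↦ hp.2 ⟨h.1, Ioo_subset_Ioo hc hd h.2⟩⟩]
  refine inv_injective ?_
  rw [← boxSign_comp_swap, ← boxSign_comp_swap]
  refine boxSign_excision_fst hc hcd hd hab (hf.comp continuous_swap) fun p hp ↦ ?_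
  exact hf0 p.swap ⟨⟨Icc_subset_Icc ha hb hp.1.2, hp.1.1⟩, fun h ↦ hp.2 ⟨h.2, h.1⟩⟩

end BoxSign

section NondegenerateZeros

variable {E F : Type*} [NormedAddCommGroup E] [NormedSpace ℝ E] [NormedAddCommGroup F]
  [NormedSpace ℝ F] {f : E → F} {p : E}

/-- `f` is differentiable at `p` with injective derivative: when `f p = 0` and the dimensions of
`E` and `F` agree, `p` is a nondegenerate zero of `f`. -/
def HasInjectiveFDerivAt (f : E → F) (p : E) : Prop :=
  ∃ f' : E →L[ℝ] F, HasFDerivAt f f' p ∧ Function.Injective f'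

namespace HasInjectiveFDerivAt

theorem comp_continuousLinearEquiv {G : Type*} [NormedAddCommGroup G] [NormedSpace ℝ G]
    (e : G ≃L[ℝ] E) {q : G} (hf : HasInjectiveFDerivAt f (e q)) :
    HasInjectiveFDerivAt (f ∘ e) q := by
  obtain ⟨f', hf', hinj⟩ := hf
  exact ⟨f'.comp (e : G →L[ℝ] E), hf'.comp q e.hasFDerivAt, hinj.comp e.injective⟩

theorem eventually_ne [FiniteDimensional ℝ E] (hf : HasInjectiveFDerivAt f p) (y : F) :
    ∀ᶠ q in 𝓝[≠] p, f q ≠ y := by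
  obtain ⟨f', hf', hinj⟩ := hf
  obtain ⟨K, -, hK⟩ := f'.toLinearMap.injective_iff_antilipschitz.1 hinj
  exact hf'.eventually_ne ⟨K, hK⟩

theorem exists_norm_sub_lt [FiniteDimensional ℝ E] (hf : HasInjectiveFDerivAt f p)
    (h0 : f p = 0) : ∃ f' : E →L[ℝ] F, Function.Injective f' ∧
      ∀ᶠ q in 𝓝[≠] p, ‖f q - f' (q - p)‖ < ‖f' (q - p)‖ := by
  obtain ⟨f', hf', hinj⟩ := hf
  obtain ⟨K, hK, hanti⟩ := f'.toLinearMap.injective_iff_antilipschitz.1 hinj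
  refine ⟨f', hinj, ?_⟩
  have hsmall := hf'.isLittleO.def (c := (2 * K : ℝ)⁻¹) (by positivity)
  filter_upwards [hsmall.filter_mono nhdsWithin_le_nhds, self_mem_nhdsWithin] with q hq hqp
  have hpos : 0 < ‖q - p‖ := norm_pos_iff.2 (sub_ne_zero.2 hqp)
  have hbelow : ‖q - p‖ ≤ K * ‖f' (q - p)‖ := by
    simpa using hanti.le_mul_dist (q - p) 0
  rw [h0, sub_zero] at hq
  calc ‖f q - f' (q - p)‖ ≤ (2 * K : ℝ)⁻¹ * ‖q - p‖ := hq
    _ < (K : ℝ)⁻¹ * ‖q - p‖ := by gcongr; linarith [NNReal.coe_pos.2 hK]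
    _ ≤ ‖f' (q - p)‖ := (inv_mul_le_iff₀ (NNReal.coe_pos.2 hK)).2 hbelow

end HasInjectiveFDerivAt

theorem finite_zeros_of_isCompact [FiniteDimensional ℝ E] {K : Set E} (hK : IsCompact K)
    (hf : Continuous f) (hd : ∀ p ∈ K, f p = 0 → HasInjectiveFDerivAt f p) :
    {p ∈ K | f p = 0}.Finite := by
  refine (hK.inter_right (isClosed_singleton.preimage hf)).finite (isDiscrete_iff_nhdsNE.2 ?_)
  rintro p ⟨hpK, hp0⟩
  rw [inf_principal_eq_bot]
  filter_upwards [(hd p hpK hp0).eventually_ne 0] with q hq hqK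
  exact hq hqK.2

theorem boxSign_eq_neg_one_of_hasInjectiveFDerivAt {f : ℝ × ℝ → ℂ} (hf : Continuous f)
    {p : ℝ × ℝ} (hp : HasInjectiveFDerivAt f p) (h0 : f p = 0) :
    ∀ᶠ s in 𝓝[>] (0 : ℝ), boxSign f (p.1 - s) (p.1 + s) (p.2 - s) (p.2 + s) = -1 := by
  obtain ⟨f', hinj, hlt⟩ := hp.exists_norm_sub_lt h0
  obtain ⟨ε, hε, hball⟩ := Metric.mem_nhdsWithin_iff.1 hlt
  filter_upwards [Ioo_mem_nhdsGT hε] with s hs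
  have hle (x : ℝ) : x - s ≤ x + s := by linarith [hs.1]
  have hne : ∀ q ∈ boxFrontier (p.1 - s) (p.1 + s) (p.2 - s) (p.2 + s), q ≠ p := by
    rintro q hq rfl
    exact hq.2 ⟨⟨sub_lt_self _ hs.1, lt_add_of_pos_right _ hs.1⟩,
      sub_lt_self _ hs.1, lt_add_of_pos_right _ hs.1⟩
  rw [boxSign_congr_of_norm_sub_lt (hle _) (hle _) hf (g := fun q ↦ f' (q - p)) (by fun_prop)]
  · refine boxSign_eq_neg_one_of_odd (hle _) (hle _) (by fun_prop) (fun q hq ↦ ?_) fun x y ↦ ?_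
    · exact (map_ne_zero_iff f' hinj).2 (sub_ne_zero.2 (hne q hq))
    · rw [← map_neg]
      congr 1
      ext <;> simp only [Prod.fst_sub, Prod.snd_sub, Prod.fst_neg, Prod.snd_neg] <;> ring
  · intro q hq
    refine hball ⟨?_, hne q hq⟩
    have hmem := hq.1
    rw [← Real.closedBall_eq_Icc, ← Real.closedBall_eq_Icc, closedBall_prod_same] at hmem
    exact Metric.closedBall_subset_ball hs.2 hmem

end NondegenerateZeros

section Counting

variable {f : ℝ × ℝ → ℂ} {a b c d m : ℝ}

/-- The zeros of `f` in the open box `(a, b) × (c, d)`. -/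
def boxZeros (f : ℝ × ℝ → ℂ) (a b c d : ℝ) : Set (ℝ × ℝ) :=
  {p ∈ Ioo a b ×ˢ Ioo c d | f p = 0}

/-- `f` is continuous, has no zero on the boundary of the box `[a, b] × [c, d]`, and all its zeros
in the box are nondegenerate. -/
structure IsRegularOnBox (f : ℝ × ℝ → ℂ) (a b c d : ℝ) : Prop where
  continuous : Continuous f
  fst_le : a ≤ b
  snd_le : c ≤ d
  ne_zero : ∀ p ∈ boxFrontier a b c d, f p ≠ 0
  hasInjectiveFDerivAt : ∀ p ∈ Icc a b ×ˢ Icc c d, f p = 0 → HasInjectiveFDerivAt f p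

theorem boxZeros_comp_swap (f : ℝ × ℝ → ℂ) (a b c d : ℝ) :
    boxZeros (f ∘ Prod.swap) c d a b = Prod.swap '' boxZeros f a b c d := by
  rw [image_swap_eq_preimage_swap]
  ext p
  simp only [boxZeros, mem_ofPred_eq, mem_preimage, mem_prod, Prod.fst_swap, Prod.snd_swap,
    Function.comp_apply, and_comm]

theorem ncard_boxZeros_comp_swap (f : ℝ × ℝ → ℂ) (a b c d : ℝ) :
    (boxZeros (f ∘ Prod.swap) c d a b).ncard = (boxZeros f a b c d).ncard := by
  rw [boxZeros_comp_swap, ncard_image_of_injective _ Prod.swap_injective]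

theorem boxZeros_union_boxZeros (ham : a ≤ m) (hmb : m ≤ b)
    (hm : ∀ y ∈ Icc c d, f (m, y) ≠ 0) :
    boxZeros f a m c d ∪ boxZeros f m b c d = boxZeros f a b c d := by
  ext p
  constructor
  · rintro (h | h)
    · exact ⟨⟨Ioo_subset_Ioo_right hmb h.1.1, h.1.2⟩, h.2⟩
    · exact ⟨⟨Ioo_subset_Ioo_left ham h.1.1, h.1.2⟩, h.2⟩
  · intro h
    rcases lt_trichotomy p.1 m with hlt | rfl | hgt
    · exact Or.inl ⟨⟨⟨h.1.1.1, hlt⟩, h.1.2⟩, h.2⟩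
    · exact absurd h.2 (hm p.2 (Ioo_subset_Icc_self h.1.2))
    · exact Or.inr ⟨⟨⟨hgt, h.1.1.2⟩, h.1.2⟩, h.2⟩

namespace IsRegularOnBox

theorem comp_swap (h : IsRegularOnBox f a b c d) : IsRegularOnBox (f ∘ Prod.swap) c d a b where
  continuous := h.continuous.comp continuous_swap
  fst_le := h.snd_le
  snd_le := h.fst_le
  ne_zero p hp := h.ne_zero p.swap (swap_mem_boxFrontier.2 hp)
  hasInjectiveFDerivAt p hp h0 :=
    (h.hasInjectiveFDerivAt p.swap ⟨hp.2, hp.1⟩ h0).comp_continuousLinearEquiv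
      (ContinuousLinearEquiv.prodComm ℝ ℝ ℝ)

theorem left (h : IsRegularOnBox f a b c d) (ham : a ≤ m) (hmb : m ≤ b)
    (hm : ∀ y ∈ Icc c d, f (m, y) ≠ 0) : IsRegularOnBox f a m c d where
  continuous := h.continuous
  fst_le := ham
  snd_le := h.snd_le
  ne_zero p hp := by
    rcases hp.1.1.2.eq_or_lt with rfl | hlt
    · exact hm p.2 hp.1.2
    · exact h.ne_zero p ⟨⟨Icc_subset_Icc_right hmb hp.1.1, hp.1.2⟩, fun hpo ↦
        hp.2 ⟨⟨hpo.1.1, hlt⟩, hpo.2⟩⟩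
  hasInjectiveFDerivAt p hp := h.hasInjectiveFDerivAt p ⟨Icc_subset_Icc_right hmb hp.1, hp.2⟩

theorem right (h : IsRegularOnBox f a b c d) (ham : a ≤ m) (hmb : m ≤ b)
    (hm : ∀ y ∈ Icc c d, f (m, y) ≠ 0) : IsRegularOnBox f m b c d where
  continuous := h.continuous
  fst_le := hmb
  snd_le := h.snd_le
  ne_zero p hp := by
    rcases hp.1.1.1.eq_or_lt with rfl | hlt
    · exact hm p.2 hp.1.2
    · exact h.ne_zero p ⟨⟨Icc_subset_Icc_left ham hp.1.1, hp.1.2⟩, fun hpo ↦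
        hp.2 ⟨⟨hlt, hpo.1.2⟩, hpo.2⟩⟩
  hasInjectiveFDerivAt p hp := h.hasInjectiveFDerivAt p ⟨Icc_subset_Icc_left ham hp.1, hp.2⟩

theorem mem_boxZeros (h : IsRegularOnBox f a b c d) {p : ℝ × ℝ} (hp : p ∈ Icc a b ×ˢ Icc c d)
    (h0 : f p = 0) : p ∈ boxZeros f a b c d :=
  ⟨by_contra fun hpo ↦ h.ne_zero p ⟨hp, hpo⟩ h0, h0⟩

theorem finite_boxZeros (h : IsRegularOnBox f a b c d) : (boxZeros f a b c d).Finite :=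
  (finite_zeros_of_isCompact (isCompact_Icc.prod isCompact_Icc) h.continuous
    h.hasInjectiveFDerivAt).subset fun _ hp ↦
      ⟨prod_mono Ioo_subset_Icc_self Ioo_subset_Icc_self hp.1, hp.2⟩

theorem boxSign_eq_neg_one (h : IsRegularOnBox f a b c d) {p : ℝ × ℝ}
    (hp : boxZeros f a b c d = {p}) : boxSign f a b c d = -1 := by
  obtain ⟨⟨⟨hap, hpb⟩, hcp, hpd⟩, h0⟩ : p ∈ boxZeros f a b c d := hp ▸ mem_singleton p
  have hd : HasInjectiveFDerivAt f p :=
    h.hasInjectiveFDerivAt p ⟨⟨hap.le, hpb.le⟩, hcp.le, hpd.le⟩ h0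
  have hfst : ∀ᶠ s in 𝓝[>] (0 : ℝ), s ∈ Ioo 0 (min (p.1 - a) (b - p.1)) :=
    Ioo_mem_nhdsGT (lt_min (sub_pos.2 hap) (sub_pos.2 hpb))
  have hsnd : ∀ᶠ s in 𝓝[>] (0 : ℝ), s ∈ Ioo 0 (min (p.2 - c) (d - p.2)) :=
    Ioo_mem_nhdsGT (lt_min (sub_pos.2 hcp) (sub_pos.2 hpd))
  obtain ⟨s, hsign, ⟨hs0, hs1⟩, -, hs2⟩ :=
    ((boxSign_eq_neg_one_of_hasInjectiveFDerivAt h.continuous hd h0).and (hfst.and hsnd)).exists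
  rw [lt_min_iff] at hs1 hs2
  rw [← hsign]
  refine boxSign_excision (by linarith) (by linarith) (by linarith) (by linarith) (by linarith)
    (by linarith) h.continuous fun q hq hq0 ↦ hq.2 ?_
  obtain rfl : q = p := by simpa only [hp, mem_singleton_iff] using h.mem_boxZeros hq.1 hq0
  exact ⟨⟨sub_lt_self _ hs0, lt_add_of_pos_right _ hs0⟩,
    sub_lt_self _ hs0, lt_add_of_pos_right _ hs0⟩

theorem boxSign_eq_neg_one_pow_of_fst_lt (h : IsRegularOnBox f a b c d)
    (ih : ∀ {a' b'}, IsRegularOnBox f a' b' c d →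
      (boxZeros f a' b' c d).ncard < (boxZeros f a b c d).ncard →
      boxSign f a' b' c d = (-1) ^ (boxZeros f a' b' c d).ncard)
    {p q : ℝ × ℝ} (hp : p ∈ boxZeros f a b c d) (hq : q ∈ boxZeros f a b c d)
    (hpq : p.1 < q.1) : boxSign f a b c d = (-1) ^ (boxZeros f a b c d).ncard := by
  obtain ⟨m, ⟨hpm, hmq⟩, hm⟩ :=
    (Ioo_infinite hpq).exists_notMem_finite (h.finite_boxZeros.image Prod.fst)
  have ham : a < m := hp.1.1.1.trans hpm
  have hmb : m < b := hmq.trans hq.1.1.2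
  have hm0 : ∀ y ∈ Icc c d, f (m, y) ≠ 0 := fun y hy h0 ↦
    hm ⟨(m, y), h.mem_boxZeros ⟨⟨ham.le, hmb.le⟩, hy⟩ h0, rfl⟩
  have hleft := h.left ham.le hmb.le hm0
  have hright := h.right ham.le hmb.le hm0
  have hncard : (boxZeros f a m c d).ncard + (boxZeros f m b c d).ncard =
      (boxZeros f a b c d).ncard := by
    rw [← boxZeros_union_boxZeros ham.le hmb.le hm0, ncard_union_eq
      (disjoint_left.2 fun r hr hr' ↦ lt_asymm hr.1.1.2 hr'.1.1.1)
      hleft.finite_boxZeros hright.finite_boxZeros]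
  have hposl := (ncard_pos hleft.finite_boxZeros).2 ⟨p, ⟨⟨hp.1.1.1, hpm⟩, hp.1.2⟩, hp.2⟩
  have hposr := (ncard_pos hright.finite_boxZeros).2 ⟨q, ⟨⟨hmq, hq.1.1.2⟩, hq.1.2⟩, hq.2⟩
  rw [← boxSign_mul_boxSign ham.le hmb.le h.snd_le h.continuous h.ne_zero hm0,
    ih hleft (by lia), ih hright (by lia), ← pow_add, hncard]

theorem boxSign_eq_neg_one_pow (h : IsRegularOnBox f a b c d) :
    boxSign f a b c d = (-1) ^ (boxZeros f a b c d).ncard := by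
  obtain ⟨n, hn⟩ : ∃ n, (boxZeros f a b c d).ncard = n := ⟨_, rfl⟩
  induction n using Nat.strong_induction_on generalizing f a b c d with
  | _ n ih =>
  subst hn
  have key {g : ℝ × ℝ → ℂ} {a₀ b₀ c₀ d₀ : ℝ} (hg : IsRegularOnBox g a₀ b₀ c₀ d₀)
      (hcard : (boxZeros g a₀ b₀ c₀ d₀).ncard = (boxZeros f a b c d).ncard) {p q : ℝ × ℝ}
      (hp : p ∈ boxZeros g a₀ b₀ c₀ d₀) (hq : q ∈ boxZeros g a₀ b₀ c₀ d₀) (hpq : p.1 ≠ q.1) :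
      boxSign g a₀ b₀ c₀ d₀ = (-1) ^ (boxZeros f a b c d).ncard := by
    have ih' {a' b' : ℝ} (hg' : IsRegularOnBox g a' b' c₀ d₀) hlt :=
      ih (boxZeros g a' b' c₀ d₀).ncard (hcard ▸ hlt) hg' rfl
    rw [← hcard]
    rcases hpq.lt_or_gt with hlt | hgt
    · exact hg.boxSign_eq_neg_one_pow_of_fst_lt ih' hp hq hlt
    · exact hg.boxSign_eq_neg_one_pow_of_fst_lt ih' hq hp hgt
  rcases (boxZeros f a b c d).ncard.lt_or_ge 2 with hlt | hge
  · rcases Nat.le_one_iff_eq_zero_or_eq_one.1 (Nat.lt_succ_iff.1 hlt) with h0 | h1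
    · rw [h0, pow_zero]
      refine boxSign_eq_one h.fst_le h.snd_le h.continuous fun p hp hp0 ↦ ?_
      rw [ncard_eq_zero h.finite_boxZeros] at h0
      exact notMem_empty p (h0 ▸ h.mem_boxZeros hp hp0)
    · obtain ⟨p, hp⟩ := ncard_eq_one.1 h1
      rw [h1, pow_one, h.boxSign_eq_neg_one hp]
  · obtain ⟨p, hp, q, hq, hpq⟩ := (one_lt_ncard h.finite_boxZeros).1 hge
    by_cases hfst : p.1 = q.1
    · have hswap := key h.comp_swap (ncard_boxZeros_comp_swap f a b c d)
        (boxZeros_comp_swap f a b c d ▸ mem_image_of_mem _ hp)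
        (boxZeros_comp_swap f a b c d ▸ mem_image_of_mem _ hq)
        (fun hsnd ↦ hpq (Prod.ext hfst hsnd))
      rw [boxSign_comp_swap, inv_eq_iff_eq_inv] at hswap
      rw [hswap, ← inv_pow, inv_neg_one]
    · exact key h rfl hp hq hfst

end IsRegularOnBox

theorem even_ncard_boxZeros_of_periodic (hper : ∀ x y, f (x + 1, y) = f (x, y))
    (hreg : IsRegularOnBox f a (a + 1) c d) (hc : ∀ x, (f (x, c)).re < 0)
    (hd : ∀ x, 0 < (f (x, d)).re) : Even (boxZeros f a (a + 1) c d).ncard := by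
  have hle := hreg.fst_le
  have hf := hreg.continuous
  have hleft : sqrtRatio (fun y ↦ f (a, y)) c d ≠ 0 :=
    sqrtRatio_ne_zero hreg.snd_le (by fun_prop) fun y hy ↦
      hreg.ne_zero _ (mk_left_mem_boxFrontier hle hy)
  have hsign : boxSign f a (a + 1) c d = 1 := by
    rw [boxSign, sqrtRatio_eq_one_of_re_neg hle (by fun_prop) (fun x _ ↦ hc x) (hper a c),
      sqrtRatio_eq_one_of_re_pos hle (by fun_prop) (fun x _ ↦ hd x) (hper a d), one_mul, one_mul]
    simp only [hper]
    exact div_self hleft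
  rw [hreg.boxSign_eq_neg_one_pow] at hsign
  exact (neg_one_pow_eq_one_iff_even (by norm_num)).1 hsign

end Counting

/-! ### Flows of Lipschitz vector fields -/

section LipschitzField

variable {E : Type*} [NormedAddCommGroup E] [NormedSpace ℝ E] {v : ℝ → E → E} {K : ℝ≥0}

theorem exists_isIntegralCurveOn_glue {z w : ℝ → E} {a b c : ℝ} (hab : a ≤ b) (hbc : b ≤ c)
    (hz : IsIntegralCurveOn z v (Icc a b)) (hw : IsIntegralCurveOn w v (Icc b c))
    (h : z b = w b) :
    ∃ y, EqOn y z (Iic b) ∧ EqOn y w (Ici b) ∧ IsIntegralCurveOn y v (Icc a c) := by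
  set y : ℝ → E := fun t ↦ if t ≤ b then z t else w t
  have hyz : EqOn y z (Iic b) := fun t ht ↦ if_pos ht
  have hyw : EqOn y w (Ici b) := fun t ht ↦ by
    rcases (mem_Ici.1 ht).eq_or_lt with rfl | hlt
    · exact (hyz self_mem_Iic).trans h
    · exact if_neg hlt.not_ge
  refine ⟨y, hyz, hyw, fun t ht ↦ ?_⟩
  have hleft : t ∈ Icc a b → HasDerivWithinAt y (v t (y t)) (Icc a b) t := fun ht ↦ by
    rw [hyz ht.2]
    exact (hz t ht).congr (hyz.mono Icc_subset_Iic_self) (hyz ht.2)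
  have hright : t ∈ Icc b c → HasDerivWithinAt y (v t (y t)) (Icc b c) t := fun ht ↦ by
    rw [hyw ht.1]
    exact (hw t ht).congr (hyw.mono Icc_subset_Ici_self) (hyw ht.1)
  rcases lt_trichotomy t b with htb | rfl | htb
  · refine (hleft ⟨ht.1, htb.le⟩).mono_of_mem_nhdsWithin ?_
    filter_upwards [self_mem_nhdsWithin, mem_nhdsWithin_of_mem_nhds (Iio_mem_nhds htb)]
      with s hs hsb using ⟨hs.1, le_of_lt hsb⟩
  · rw [← Icc_union_Icc_eq_Icc hab hbc]
    exact (hleft ⟨ht.1, le_rfl⟩).union (hright ⟨le_rfl, ht.2⟩)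
  · refine (hright ⟨htb.le, ht.2⟩).mono_of_mem_nhdsWithin ?_
    filter_upwards [self_mem_nhdsWithin, mem_nhdsWithin_of_mem_nhds (Ioi_mem_nhds htb)]
      with s hs hbs using ⟨le_of_lt hbs, hs.2⟩

/-- A continuous time-dependent vector field which is globally Lipschitz in space, uniformly in
time; such fields have global flows. -/
structure IsLipschitzField (v : ℝ → E → E) : Prop where
  continuous : Continuous (Function.uncurry v)
  exists_lipschitzWith : ∃ K : ℝ≥0, ∀ t, LipschitzWith K (v t)

namespace IsLipschitzField

theorem eq_of_apply_eq (hv : IsLipschitzField v) {z w : ℝ → E} (hz : IsIntegralCurve z v)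
    (hw : IsIntegralCurve w v) {t : ℝ} (h : z t = w t) : z = w := by
  obtain ⟨K, hK⟩ := hv.exists_lipschitzWith
  exact ODE_solution_unique_univ (s := fun _ ↦ univ) (fun t ↦ (hK t).lipschitzOnWith)
    (fun t ↦ ⟨hz t, mem_univ _⟩) (fun t ↦ ⟨hw t, mem_univ _⟩) h

theorem linearization (hv : IsLipschitzField v) {v' : ℝ → E → E →L[ℝ] E}
    (hv' : Continuous (Function.uncurry v')) (hd : ∀ t z, HasFDerivAt (v t) (v' t z) z)
    {γ : ℝ → E} (hγ : Continuous γ) : IsLipschitzField fun t y ↦ v' t (γ t) y := by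
  obtain ⟨K, hK⟩ := hv.exists_lipschitzWith
  refine ⟨?_, K, fun t ↦ (v' t (γ t)).lipschitz.weaken ((hd t (γ t)).le_of_lipschitz (hK t))⟩
  have hA : Continuous fun t ↦ v' t (γ t) := hv'.comp (continuous_id.prodMk hγ)
  exact (hA.comp continuous_fst).clm_apply continuous_snd

variable [CompleteSpace E]

theorem exists_isIntegralCurveOn_of_mul_le (hv : IsLipschitzField v)
    (hK : ∀ t, LipschitzWith K (v t)) {ε : ℝ} (hε : 0 ≤ ε) (hKε : K * ε ≤ 1 / 2) (t₀ : ℝ)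
    (z₀ : E) : ∃ z : ℝ → E, z t₀ = z₀ ∧ IsIntegralCurveOn z v (Icc (t₀ - ε) (t₀ + ε)) := by
  have hvc := hv.continuous
  obtain ⟨C, hC⟩ := (isCompact_Icc (a := t₀ - ε) (b := t₀ + ε)).exists_bound_of_continuousOn
    (f := fun t ↦ v t z₀) (by fun_prop)
  have hC0 : 0 ≤ C := (norm_nonneg _).trans (hC t₀ ⟨by linarith, by linarith⟩)
  have hmul : K * (2 * C * ε) ≤ C := by nlinarith
  refine IsPicardLindelof.exists_eq_forall_mem_Icc_hasDerivWithinAt₀ (K := K)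
    (t₀ := ⟨t₀, by linarith, by linarith⟩) (a := ⟨2 * C * ε, by positivity⟩)
    (L := ⟨2 * C, by positivity⟩)
    ⟨fun t _ ↦ (hK t).lipschitzOnWith, fun x _ ↦ by fun_prop, fun t ht x hx ↦ ?_, ?_⟩
  · calc ‖v t x‖ ≤ ‖v t z₀‖ + ‖v t x - v t z₀‖ := norm_le_norm_add_norm_sub' _ _
      _ ≤ C + K * (2 * C * ε) := by
        gcongr
        · exact hC t ht
        · exact ((hK t).norm_sub_le x z₀).trans
            (mul_le_mul_of_nonneg_left (mem_closedBall_iff_norm.1 hx) K.2)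
      _ ≤ 2 * C := by linarith
  · change 2 * C * max (t₀ + ε - t₀) (t₀ - (t₀ - ε)) ≤ 2 * C * ε - 0
    rw [add_sub_cancel_left, sub_sub_cancel, max_self, sub_zero]

theorem exists_isIntegralCurveOn_Icc (hv : IsLipschitzField v) (z₀ : E) (r : ℝ) :
    ∃ z : ℝ → E, z 0 = z₀ ∧ IsIntegralCurveOn z v (Icc (-r) r) := by
  obtain ⟨K, hK⟩ := hv.exists_lipschitzWith
  set ε : ℝ := 1 / (2 * (K + 1))
  have hε : 0 < ε := by positivity
  have hKε : K * ε ≤ 1 / 2 := by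
    rw [mul_one_div, div_le_div_iff₀ (by positivity) (by positivity)]
    linarith
  obtain ⟨n, hn⟩ := exists_nat_ge (r / ε)
  suffices h : ∃ z : ℝ → E, z 0 = z₀ ∧ IsIntegralCurveOn z v (Icc (-(n * ε)) (n * ε)) by
    obtain ⟨z, hz0, hz⟩ := h
    rw [div_le_iff₀ hε] at hn
    exact ⟨z, hz0, hz.mono (Icc_subset_Icc (neg_le_neg hn) hn)⟩
  clear hn
  induction n with
  | zero =>
    refine ⟨fun _ ↦ z₀, rfl, fun t _ ↦ ?_⟩
    simp only [Nat.cast_zero, zero_mul, neg_zero, Icc_self]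
    exact hasDerivWithinAt_iff_hasFDerivWithinAt.2 (.of_subsingleton subsingleton_singleton)
  | succ n ih =>
    obtain ⟨z, hz0, hz⟩ := ih
    have hn : 0 ≤ n * ε := by positivity
    obtain ⟨w, hw0, hw⟩ := hv.exists_isIntegralCurveOn_of_mul_le hK hε.le hKε (n * ε) (z (n * ε))
    obtain ⟨u, hu0, hu⟩ :=
      hv.exists_isIntegralCurveOn_of_mul_le hK hε.le hKε (-(n * ε)) (z (-(n * ε)))
    obtain ⟨y, hyz, -, hy⟩ := exists_isIntegralCurveOn_glue (by linarith) (by linarith) hz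
      (hw.mono (Icc_subset_Icc_left (by linarith))) hw0.symm
    have hyu : u (-(n * ε)) = y (-(n * ε)) :=
      hu0.trans (hyz (show -(n * ε) ≤ n * ε by linarith)).symm
    obtain ⟨x, -, hxy, hx⟩ := exists_isIntegralCurveOn_glue (by linarith) (by linarith)
      (hu.mono (Icc_subset_Icc_right (by linarith))) hy hyu
    refine ⟨x, ?_, ?_⟩
    · rw [hxy (show -(n * ε) ≤ 0 by linarith), hyz (show 0 ≤ n * ε from hn), hz0]
    · rwa [show (-((n + 1 : ℕ) * ε)) = -(n * ε) - ε by push_cast; ring,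
        show ((n + 1 : ℕ) * ε) = n * ε + ε by push_cast; ring]

theorem exists_isIntegralCurve (hv : IsLipschitzField v) (z₀ : E) :
    ∃ z : ℝ → E, z 0 = z₀ ∧ IsIntegralCurve z v := by
  choose Z hZ0 hZ using hv.exists_isIntegralCurveOn_Icc z₀
  obtain ⟨K, hK⟩ := hv.exists_lipschitzWith
  have hderiv (r t : ℝ) (ht : t ∈ Ioo (-r) r) : HasDerivAt (Z r) (v t (Z r t)) t :=
    (hZ r t (Ioo_subset_Icc_self ht)).hasDerivAt (Icc_mem_nhds ht.1 ht.2)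
  have huniq {q r t : ℝ} (hqr : q ≤ r) (ht : t ∈ Ioo (-q) q) : Z q t = Z r t := by
    have h0 : (0 : ℝ) ∈ Ioo (-q) q := by
      constructor <;> linarith [ht.1, ht.2]
    exact ODE_solution_unique_of_mem_Ioo (v := v) (s := fun _ ↦ univ)
      (fun t _ ↦ (hK t).lipschitzOnWith) h0 (fun s hs ↦ ⟨hderiv q s hs, mem_univ _⟩)
      (fun s hs ↦ ⟨hderiv r s (Ioo_subset_Ioo (neg_le_neg hqr) hqr hs), mem_univ _⟩)
      ((hZ0 q).trans (hZ0 r).symm) ht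
  refine ⟨fun t ↦ Z (|t| + 1) t, hZ0 _, fun t ↦ ?_⟩
  have hmem (s : ℝ) : s ∈ Ioo (-(|s| + 1)) (|s| + 1) := abs_lt.1 (lt_add_one _)
  refine (hderiv (|t| + 1) t (hmem t)).congr_of_eventuallyEq ?_
  filter_upwards [Ioo_mem_nhds (hmem t).1 (hmem t).2] with s hs
  rcases le_total (|s| + 1) (|t| + 1) with h | h
  · exact huniq h (hmem s)
  · exact (huniq h hs).symm

/-- The integral curve of `v` starting at `p` at time `0`. -/
noncomputable def flow (hv : IsLipschitzField v) (p : E) : ℝ → E :=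
  (hv.exists_isIntegralCurve p).choose

@[simp]
theorem flow_zero (hv : IsLipschitzField v) (p : E) : hv.flow p 0 = p :=
  (hv.exists_isIntegralCurve p).choose_spec.1

theorem isIntegralCurve_flow (hv : IsLipschitzField v) (p : E) : IsIntegralCurve (hv.flow p) v :=
  (hv.exists_isIntegralCurve p).choose_spec.2

theorem eq_flow (hv : IsLipschitzField v) {z : ℝ → E} (hz : IsIntegralCurve z v) :
    z = hv.flow (z 0) :=
  hv.eq_of_apply_eq hz (hv.isIntegralCurve_flow _) (t := 0) (hv.flow_zero _).symm

theorem flow_add_of_periodic (hv : IsLipschitzField v) {T : ℝ} (hT : ∀ t z, v (t + T) z = v t z)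
    (p : E) (t : ℝ) : hv.flow p (t + T) = hv.flow (hv.flow p T) t := by
  have hcurve : IsIntegralCurve (fun t ↦ hv.flow p (t + T)) v := fun t ↦ by
    simpa only [hT] using (hv.isIntegralCurve_flow p (t + T)).comp_add_const t T
  simpa only [zero_add] using congrFun (hv.eq_flow hcurve) t

theorem flow_add_of_invariant (hv : IsLipschitzField v) {e : E} (he : ∀ t z, v t (z + e) = v t z)
    (p : E) (t : ℝ) : hv.flow (p + e) t = hv.flow p t + e := by
  have hcurve : IsIntegralCurve (fun t ↦ hv.flow p t + e) v := fun t ↦ by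
    simpa only [he] using (hv.isIntegralCurve_flow p t).add_const e
  simpa only [flow_zero] using (congrFun (hv.eq_flow hcurve) t).symm

theorem exists_lipschitzWith_flow (hv : IsLipschitzField v) (T : ℝ) :
    ∃ C : ℝ≥0, ∀ t ∈ Icc 0 T, LipschitzWith C (hv.flow · t) := by
  obtain ⟨K, hK⟩ := hv.exists_lipschitzWith
  refine ⟨⟨Real.exp (K * T), (Real.exp_pos _).le⟩, fun t ht ↦ .of_dist_le_mul fun p q ↦ ?_⟩
  calc dist (hv.flow p t) (hv.flow q t)
      ≤ dist p q * Real.exp (K * (t - 0)) :=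
        dist_le_of_trajectories_ODE hK (hv.isIntegralCurve_flow p).continuous.continuousOn
          (fun t _ ↦ (hv.isIntegralCurve_flow p t).hasDerivWithinAt)
          (hv.isIntegralCurve_flow q).continuous.continuousOn
          (fun t _ ↦ (hv.isIntegralCurve_flow q t).hasDerivWithinAt)
          (by rw [flow_zero, flow_zero]) t ht
    _ ≤ dist p q * Real.exp (K * T) := by
        rw [sub_zero]
        gcongr
        exact ht.2
    _ = Real.exp (K * T) * dist p q := mul_comm _ _

theorem continuous_flow (hv : IsLipschitzField v) {T : ℝ} (hT : 0 ≤ T) :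
    Continuous (hv.flow · T) := by
  obtain ⟨C, hC⟩ := hv.exists_lipschitzWith_flow T
  exact (hC T (right_mem_Icc.2 hT)).continuous

/-- The flow at time `T` of the linear equation `y' = A t y`, as a continuous linear map. -/
noncomputable def linearFlow {A : ℝ → E →L[ℝ] E} (hA : IsLipschitzField fun t y ↦ A t y) {T : ℝ}
    (hT : 0 ≤ T) : E →L[ℝ] E where
  toFun p := hA.flow p T
  map_add' p q := by
    have hcurve : IsIntegralCurve (hA.flow p + hA.flow q) fun t y ↦ A t y := fun t ↦ by
      simpa only [Pi.add_apply, map_add] using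
        (hA.isIntegralCurve_flow p t).add (hA.isIntegralCurve_flow q t)
    simpa only [Pi.add_apply, flow_zero] using (congrFun (hA.eq_flow hcurve) T).symm
  map_smul' c p := by
    have hcurve : IsIntegralCurve (c • hA.flow p) fun t y ↦ A t y := fun t ↦ by
      simpa only [Pi.smul_apply, map_smul] using (hA.isIntegralCurve_flow p t).const_smul c
    simpa only [Pi.smul_apply, flow_zero, RingHom.id_apply] using
      (congrFun (hA.eq_flow hcurve) T).symm
  cont := hA.continuous_flow hT

theorem linearFlow_apply {A : ℝ → E →L[ℝ] E} (hA : IsLipschitzField fun t y ↦ A t y) {T : ℝ}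
    (hT : 0 ≤ T) (p : E) : hA.linearFlow hT p = hA.flow p T :=
  rfl

end IsLipschitzField

theorem exists_norm_sub_le_of_continuous_fderiv {v' : ℝ → E → E →L[ℝ] E}
    (hv' : Continuous (Function.uncurry v')) (hd : ∀ t z, HasFDerivAt (v t) (v' t z) z)
    {γ : ℝ → E} (hγ : Continuous γ) {s : Set ℝ} (hs : IsCompact s) {ε : ℝ} (hε : 0 < ε) :
    ∃ δ > 0, ∀ t ∈ s, ∀ z, ‖z - γ t‖ < δ →
      ‖v t z - v t (γ t) - v' t (γ t) (z - γ t)‖ ≤ ε * ‖z - γ t‖ := by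
  have hgraph : IsCompact ((fun t ↦ (t, γ t)) '' s) := hs.image (by fun_prop)
  obtain ⟨δ, hδ, hδv⟩ := Metric.mem_uniformity_dist.1 <|
    hgraph.uniformContinuousAt_of_continuousAt (Function.uncurry v')
      (fun _ _ ↦ hv'.continuousAt) (Metric.dist_mem_uniformity hε)
  refine ⟨δ, hδ, fun t ht z hz ↦ ?_⟩
  refine (convex_ball (γ t) δ).norm_image_sub_le_of_norm_hasFDerivWithin_le'
    (fun y _ ↦ (hd t y).hasFDerivWithinAt) (fun y hy ↦ ?_) (Metric.mem_ball_self hδ)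
    (mem_ball_iff_norm.2 hz)
  have hclose : dist (v' t (γ t)) (v' t y) < ε := by
    refine hδv (a := (t, γ t)) (b := (t, y)) ?_ (mem_image_of_mem _ ht)
    rwa [Prod.dist_eq, dist_self, max_eq_right dist_nonneg, dist_comm]
  rw [← dist_eq_norm, dist_comm]
  exact hclose.le

theorem gronwallBound_zero_left (K ε x : ℝ) :
    gronwallBound 0 K ε x = ε * gronwallBound 0 K 1 x := by
  unfold gronwallBound
  split_ifs <;> ring

namespace IsLipschitzField

variable [CompleteSpace E]

theorem hasFDerivAt_flow (hv : IsLipschitzField v) {v' : ℝ → E → E →L[ℝ] E}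
    (hv' : Continuous (Function.uncurry v')) (hd : ∀ t z, HasFDerivAt (v t) (v' t z) z)
    {T : ℝ} (hT : 0 ≤ T) (p : E)
    (hA : IsLipschitzField fun t y ↦ v' t (hv.flow p t) y) :
    HasFDerivAt (hv.flow · T) (hA.linearFlow hT) p := by
  obtain ⟨K, hK⟩ := hA.exists_lipschitzWith
  obtain ⟨C, hC⟩ := hv.exists_lipschitzWith_flow T
  have hcont (q : E) : Continuous (hv.flow q) := (hv.isIntegralCurve_flow q).continuous
  set G := gronwallBound 0 K 1 T
  refine .of_isLittleO (Asymptotics.isLittleO_iff.2 fun c hc ↦ ?_)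
  obtain ⟨ε, hε, hεc⟩ := exists_pos_mul_lt hc (C * G)
  obtain ⟨δ, hδ, hδv⟩ :=
    exists_norm_sub_le_of_continuous_fderiv hv' hd (hcont p) isCompact_Icc (s := Icc 0 T) hε
  have hnear : ∀ᶠ q in 𝓝 p, C * ‖q - p‖ < δ :=
    (Continuous.tendsto' (by fun_prop) p 0 (by simp)).eventually_lt_const hδ
  filter_upwards [hnear] with q hq
  have hdist (t : ℝ) (ht : t ∈ Icc 0 T) : ‖hv.flow q t - hv.flow p t‖ ≤ C * ‖q - p‖ :=
    (hC t ht).norm_sub_le q p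
  have hgronwall := dist_le_of_approx_trajectories_ODE (a := 0) (b := T) (δ := 0) (εg := 0)
    (εf := ε * (C * ‖q - p‖)) hK ((hcont q).sub (hcont p)).continuousOn
    (fun t _ ↦ ((hv.isIntegralCurve_flow q t).sub (hv.isIntegralCurve_flow p t)).hasDerivWithinAt)
    (fun t ht ↦ ?_) (hA.isIntegralCurve_flow (q - p)).continuous.continuousOn
    (fun t _ ↦ (hA.isIntegralCurve_flow (q - p) t).hasDerivWithinAt)
    (fun t _ ↦ (dist_self _).le) (by simp) T (right_mem_Icc.2 hT)
  · rw [add_zero, sub_zero, gronwallBound_zero_left, dist_eq_norm] at hgronwall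
    calc ‖hv.flow q T - hv.flow p T - hA.linearFlow hT (q - p)‖
        ≤ ε * (C * ‖q - p‖) * G := hgronwall
      _ = C * G * ε * ‖q - p‖ := by ring
      _ ≤ c * ‖q - p‖ := by gcongr
  · have ht' := Ico_subset_Icc_self ht
    rw [dist_eq_norm]
    exact (hδv t ht' _ ((hdist t ht').trans_lt hq)).trans (by gcongr; exact hdist t ht')

theorem exists_norm_flow_sub_le (hv : IsLipschitzField v) (p : E) (T : ℝ) {ε : ℝ} (hε : 0 < ε) :
    ∃ δ > 0, ∀ s t, 0 ≤ s → s ≤ t → t ≤ T → t - s < δ →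
      ‖hv.flow p t - hv.flow p s - (t - s) • v s (hv.flow p s)‖ ≤ ε * (t - s) := by
  have hz := hv.isIntegralCurve_flow p
  have hvel : Continuous fun t ↦ v t (hv.flow p t) :=
    hv.continuous.comp (continuous_id.prodMk hz.continuous)
  obtain ⟨δ, hδ, hδv⟩ := Metric.uniformContinuousOn_iff.1
    ((isCompact_Icc (a := 0) (b := T)).uniformContinuousOn_of_continuous hvel.continuousOn) ε hε
  refine ⟨δ, hδ, fun s t hs hst ht hδst ↦ ?_⟩
  have hmean := (convex_Icc s t).norm_image_sub_le_of_norm_hasDerivWithin_le (C := ε)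
    (fun σ _ ↦ ((hz σ).sub ((hasDerivAt_id σ).smul_const (v s (hv.flow p s)))).hasDerivWithinAt)
    (fun σ hσ ↦ ?_) (left_mem_Icc.2 hst) (right_mem_Icc.2 hst)
  · rw [Real.norm_of_nonneg (sub_nonneg.2 hst)] at hmean
    simpa only [Pi.sub_apply, id_eq, sub_smul, sub_sub_sub_comm] using hmean
  · rw [one_smul, ← dist_eq_norm]
    refine (hδv σ ⟨hs.trans hσ.1, hσ.2.trans ht⟩ s ⟨hs, hst.trans ht⟩ ?_).le
    rw [Real.dist_eq, abs_of_nonneg (sub_nonneg.2 hσ.1)]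
    linarith [hσ.2]

theorem norm_euler_sub_flow_le (hv : IsLipschitzField v) (hK : ∀ t, LipschitzWith K (v t))
    {τ ε ρ : ℝ} {n : ℕ} (hτ : 0 ≤ τ) (hε : 0 ≤ ε) (hρ : 0 ≤ ρ) {p : E} {w : ℕ → E}
    (hflow : ∀ m < n, ‖hv.flow p (τ * (m + 1 : ℕ)) - hv.flow p (τ * m) -
      τ • v (τ * m) (hv.flow p (τ * m))‖ ≤ ε * τ)
    (hw : ∀ m < n, ‖w (m + 1) - w m - τ • v (τ * m) (w m)‖ ≤ ρ * τ) :
    ‖w n - hv.flow p (τ * n)‖ ≤ (‖w 0 - p‖ + τ * n * (ε + ρ)) * Real.exp (K * (τ * n)) := by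
  -- `discrete_gronwall` needs the recursion for all `m`, so the error is cut off after step `n`.
  set e : ℕ → ℝ := fun m ↦ if m ≤ n then ‖w m - hv.flow p (τ * m)‖ else 0
  have he (m : ℕ) : 0 ≤ e m := by
    unfold e
    split_ifs
    exacts [norm_nonneg _, le_rfl]
  have hstep : ∀ m ≥ 0, e (m + 1) ≤ (1 + τ * K) * e m + τ * (ε + ρ) := by
    intro m _
    by_cases hm : m < n
    · have hvel : ‖τ • v (τ * m) (w m) - τ • v (τ * m) (hv.flow p (τ * m))‖ ≤
          τ * (K * ‖w m - hv.flow p (τ * m)‖) := by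
        rw [← smul_sub, norm_smul, Real.norm_of_nonneg hτ]
        gcongr
        exact (hK _).norm_sub_le _ _
      have hsplit : w (m + 1) - hv.flow p (τ * (m + 1 : ℕ)) =
          (w m - hv.flow p (τ * m)) +
          (τ • v (τ * m) (w m) - τ • v (τ * m) (hv.flow p (τ * m))) +
          (w (m + 1) - w m - τ • v (τ * m) (w m)) -
          (hv.flow p (τ * (m + 1 : ℕ)) - hv.flow p (τ * m) -
            τ • v (τ * m) (hv.flow p (τ * m))) := by
        abel
      simp only [e, hm.le, Nat.succ_le_of_lt hm, if_true]
      rw [hsplit]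
      refine (norm_sub_le_of_le (norm_add₃_le.trans (add_le_add_three le_rfl hvel (hw m hm)))
        (hflow m hm)).trans_eq ?_
      ring
    · have hzero : e (m + 1) = 0 := if_neg (by lia)
      rw [hzero]
      have := he m
      positivity
  have hgronwall := discrete_gronwall (he 0) hstep (fun _ _ ↦ by positivity)
    (fun _ _ ↦ by positivity) n.zero_le
  simpa [e, mul_assoc, mul_left_comm, mul_comm] using hgronwall

theorem tendsto_euler (hv : IsLipschitzField v) {T : ℝ} (hT : 0 ≤ T) {ι : Type*} {l : Filter ι}
    {N : ι → ℕ} (hN : Tendsto N l atTop) {ρ : ι → ℝ} (hρ : Tendsto ρ l (𝓝 0))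
    (hρ0 : ∀ i, 0 ≤ ρ i) {w : ι → ℕ → E} {p : E} (hw0 : Tendsto (w · 0) l (𝓝 p))
    (hw : ∀ i, ∀ m < N i, ‖w i (m + 1) - w i m - (T / N i) • v (T / N i * m) (w i m)‖ ≤
      ρ i * (T / N i)) : Tendsto (fun i ↦ w i (N i)) l (𝓝 (hv.flow p T)) := by
  obtain ⟨K, hK⟩ := hv.exists_lipschitzWith
  refine Metric.tendsto_nhds.2 fun c hc ↦ ?_
  obtain ⟨ε, hε, hεc⟩ := exists_pos_mul_lt hc (T * Real.exp (K * T))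
  replace hεc : (0 + T * (ε + 0)) * Real.exp (K * T) < c := by
    rwa [zero_add, add_zero, mul_right_comm]
  obtain ⟨δ, hδ, hflow⟩ := hv.exists_norm_flow_sub_le p T hε
  have hsmall : ∀ᶠ i in l, T / N i < δ :=
    ((tendsto_const_div_atTop_nhds_zero_nat T).comp hN).eventually_lt_const hδ
  have hbound : ∀ᶠ i in l, (‖w i 0 - p‖ + T * (ε + ρ i)) * Real.exp (K * T) < c :=
    (((tendsto_iff_norm_sub_tendsto_zero.1 hw0).add
      ((hρ.const_add ε).const_mul T)).mul_const _).eventually_lt_const hεc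
  filter_upwards [hsmall, hbound, hN.eventually_ne_atTop 0] with i hi hci hNi
  have hτN : T / N i * N i = T := div_mul_cancel₀ T (Nat.cast_ne_zero.2 hNi)
  have hτ : 0 ≤ T / N i := by positivity
  have herr := hv.norm_euler_sub_flow_le hK hτ hε.le (hρ0 i) (p := p) (fun m hm ↦ ?_) (hw i)
  · rw [hτN] at herr
    rw [dist_eq_norm]
    exact herr.trans_lt hci
  · have hdiff : T / N i * (m + 1 : ℕ) - T / N i * m = T / N i := by push_cast; ring
    have hstep := hflow (T / N i * m) (T / N i * (m + 1 : ℕ)) (by positivity)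
      (by linarith) ?_ (hdiff.trans_lt hi)
    · rwa [hdiff] at hstep
    · calc T / N i * (m + 1 : ℕ) ≤ T / N i * N i := by gcongr; exact hm
        _ = T := hτN

end IsLipschitzField

end LipschitzField

/-! ### The shooting map of a periodic force -/

section PeriodicFunctions

variable {F : ℝ → ℝ → ℝ}

theorem hasDerivAt_of_contDiff_uncurry {n : WithTop ℕ∞} (hF : ContDiff ℝ n (Function.uncurry F))
    (hn : n ≠ 0) (t x : ℝ) : HasDerivAt (F t) (deriv (F t) x) x :=
  ((hF.differentiable hn).comp ((differentiable_const t).prodMk differentiable_id) x).hasDerivAt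

theorem contDiff_uncurry_deriv {n m : WithTop ℕ∞} (hF : ContDiff ℝ n (Function.uncurry F))
    (hmn : m + 1 ≤ n) : ContDiff ℝ m (Function.uncurry fun t ↦ deriv (F t)) := by
  have hn : n ≠ 0 := by
    rintro rfl
    simp at hmn
  have hderiv : (Function.uncurry fun t ↦ deriv (F t)) =
      fun p ↦ fderiv ℝ (Function.uncurry F) p (0, 1) := funext fun ⟨t, x⟩ ↦
    ((hF.differentiable hn (t, x)).hasFDerivAt.comp_hasDerivAt x
      ((hasDerivAt_const x t).prodMk (hasDerivAt_id x))).deriv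
  rw [hderiv]
  exact (hF.fderiv_right hmn).clm_apply contDiff_const

theorem deriv_add_of_periodic {f : ℝ → ℝ} {c : ℝ} (hf : Function.Periodic f c) :
    Function.Periodic (deriv f) c := fun x ↦ by
  rw [← deriv_comp_add_const, funext hf]

theorem exists_abs_le_of_periodic (hF : Continuous (Function.uncurry F)) {S T : ℝ} (hS : 0 < S)
    (hT : 0 < T) (hx : ∀ t, Function.Periodic (F t) S) (ht : Function.Periodic F T) :
    ∃ B : ℝ≥0, ∀ t x, |F t x| ≤ B := by
  obtain ⟨C, hC⟩ := ((isCompact_Icc (a := 0) (b := T)).prod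
    (isCompact_Icc (a := 0) (b := S))).exists_bound_of_continuousOn hF.continuousOn
  refine ⟨C.toNNReal, fun t x ↦ ?_⟩
  obtain ⟨s, hs, hts⟩ := ht.exists_mem_Ico₀ hT t
  obtain ⟨y, hy, hxy⟩ := (hx s).exists_mem_Ico₀ hS x
  rw [hts, hxy]
  exact (hC (s, y) ⟨Ico_subset_Icc_self hs, Ico_subset_Icc_self hy⟩).trans (Real.le_coe_toNNReal C)

end PeriodicFunctions

/-- The first order system on phase space equivalent to `ẍ + W(t, x) = 0`. -/
def phaseField (W : ℝ → ℝ → ℝ) (t : ℝ) (p : ℝ × ℝ) : ℝ × ℝ :=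
  (p.2, -W t p.1)

namespace phaseField

variable {W : ℝ → ℝ → ℝ} {z : ℝ → ℝ × ℝ}

theorem isLipschitzField (hW : Continuous (Function.uncurry W)) {L : ℝ≥0}
    (hL : ∀ t, LipschitzWith L (W t)) : IsLipschitzField (phaseField W) where
  continuous := by
    have hforce : Continuous fun q : ℝ × ℝ × ℝ ↦ W q.1 q.2.1 :=
      hW.comp (continuous_fst.prodMk continuous_snd.fst)
    exact continuous_snd.snd.prodMk hforce.neg
  exists_lipschitzWith :=
    ⟨_, fun t ↦ LipschitzWith.prod_snd.prodMk ((hL t).comp LipschitzWith.prod_fst).neg⟩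

theorem hasDerivAt_fst (hz : IsIntegralCurve z (phaseField W)) (t : ℝ) :
    HasDerivAt (fun t ↦ (z t).1) (z t).2 t :=
  (ContinuousLinearMap.fst ℝ ℝ ℝ).hasFDerivAt.comp_hasDerivAt t (hz t)

theorem hasDerivAt_snd (hz : IsIntegralCurve z (phaseField W)) (t : ℝ) :
    HasDerivAt (fun t ↦ (z t).2) (-W t (z t).1) t :=
  (ContinuousLinearMap.snd ℝ ℝ ℝ).hasFDerivAt.comp_hasDerivAt t (hz t)

theorem deriv_fst (hz : IsIntegralCurve z (phaseField W)) :
    deriv (fun t ↦ (z t).1) = fun t ↦ (z t).2 :=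
  funext fun t ↦ (hasDerivAt_fst hz t).deriv

theorem deriv_deriv_fst_add (hz : IsIntegralCurve z (phaseField W)) (t : ℝ) :
    deriv (deriv fun t ↦ (z t).1) t + W t (z t).1 = 0 := by
  rw [deriv_fst hz, (hasDerivAt_snd hz t).deriv, neg_add_cancel]

theorem contDiff_two_fst (hz : IsIntegralCurve z (phaseField W))
    (hW : Continuous (Function.uncurry W)) : ContDiff ℝ 2 fun t ↦ (z t).1 := by
  have hsnd : ContDiff ℝ 1 fun t ↦ (z t).2 := by
    refine contDiff_one_iff_deriv.2 ⟨fun t ↦ (hasDerivAt_snd hz t).differentiableAt, ?_⟩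
    rw [funext fun t ↦ (hasDerivAt_snd hz t).deriv]
    exact (hW.comp (continuous_id.prodMk hz.continuous.fst)).neg
  rw [← one_add_one_eq_two, contDiff_succ_iff_deriv, deriv_fst hz]
  exact ⟨fun t ↦ (hasDerivAt_fst hz t).differentiableAt, by simp, hsnd⟩

theorem isIntegralCurve_of_contDiff {x : ℝ → ℝ} (hx : ContDiff ℝ 2 x)
    (h : ∀ t, deriv (deriv x) t + W t (x t) = 0) :
    IsIntegralCurve (fun t ↦ (x t, deriv x t)) (phaseField W) := by
  rw [← one_add_one_eq_two, contDiff_succ_iff_deriv] at hx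
  refine fun t ↦ (hx.1 t).hasDerivAt.prodMk ?_
  rw [← eq_neg_of_add_eq_zero_left (h t)]
  exact (hx.2.2.differentiable one_ne_zero t).hasDerivAt

/-- The space derivative of `phaseField W`. -/
noncomputable def spaceFDeriv (W : ℝ → ℝ → ℝ) (t : ℝ) (p : ℝ × ℝ) : ℝ × ℝ →L[ℝ] ℝ × ℝ :=
  (ContinuousLinearMap.snd ℝ ℝ ℝ).prod (-(deriv (W t) p.1 • ContinuousLinearMap.fst ℝ ℝ ℝ))

theorem hasFDerivAt (hW : ContDiff ℝ 1 (Function.uncurry W)) (t : ℝ) (p : ℝ × ℝ) :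
    HasFDerivAt (phaseField W t) (spaceFDeriv W t p) p :=
  hasFDerivAt_snd.prodMk
    ((hasDerivAt_of_contDiff_uncurry hW one_ne_zero t p.1).comp_hasFDerivAt p hasFDerivAt_fst).neg

theorem continuous_spaceFDeriv (hW : ContDiff ℝ 1 (Function.uncurry W)) :
    Continuous (Function.uncurry (spaceFDeriv W)) := by
  have hderiv : Continuous fun q : ℝ × ℝ × ℝ ↦ deriv (W q.1) q.2.1 :=
    (contDiff_uncurry_deriv hW (m := 0) (zero_add 1).le).continuous.comp
      (continuous_fst.prodMk continuous_snd.fst)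
  exact (ContinuousLinearMap.prodₗᵢ ℝ).continuous.comp
    (continuous_const.prodMk (hderiv.smul continuous_const).neg)

end phaseField

/-- `W` is a `C¹` force on the circle `ℝ/ℤ`, depending `T`-periodically on time. -/
structure IsPeriodicForce (W : ℝ → ℝ → ℝ) (T : ℝ) : Prop where
  period_pos : 0 < T
  contDiff : ContDiff ℝ 1 (Function.uncurry W)
  add_one : ∀ t, Function.Periodic (W t) 1
  add_period : Function.Periodic W T

namespace IsPeriodicForce

variable {W : ℝ → ℝ → ℝ} {T : ℝ}

theorem deriv_potential {V : ℝ → ℝ → ℝ} (hT : 0 < T) (hV : ContDiff ℝ 2 (Function.uncurry V))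
    (hVx : ∀ t, Function.Periodic (V t) 1) (hVt : Function.Periodic V T) :
    IsPeriodicForce (fun t ↦ deriv (V t)) T where
  period_pos := hT
  contDiff := contDiff_uncurry_deriv hV one_add_one_eq_two.le
  add_one t := deriv_add_of_periodic (hVx t)
  add_period t := congrArg deriv (hVt t)

variable (h : IsPeriodicForce W T)
include h

theorem add_int (m : ℤ) (t x : ℝ) : W t (x + m) = W t x := by
  simpa using (h.add_one t).int_mul m x

theorem exists_abs_le : ∃ M : ℝ≥0, ∀ t x, |W t x| ≤ M :=
  exists_abs_le_of_periodic h.contDiff.continuous one_pos h.period_pos h.add_one h.add_period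

theorem exists_lipschitzWith : ∃ L : ℝ≥0, ∀ t, LipschitzWith L (W t) := by
  obtain ⟨L, hL⟩ := exists_abs_le_of_periodic
    (contDiff_uncurry_deriv h.contDiff (m := 0) (zero_add 1).le).continuous one_pos h.period_pos
    (fun t ↦ deriv_add_of_periodic (h.add_one t)) (fun t ↦ congrArg deriv (h.add_period t))
  exact ⟨L, fun t ↦ lipschitzWith_of_nnnorm_deriv_le
    (fun x ↦ (hasDerivAt_of_contDiff_uncurry h.contDiff one_ne_zero t x).differentiableAt) (hL t)⟩

theorem isLipschitzField : IsLipschitzField (phaseField W) := by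
  obtain ⟨L, hL⟩ := h.exists_lipschitzWith
  exact phaseField.isLipschitzField h.contDiff.continuous hL

/-- The solution of `ẍ + W(t, x) = 0`, as a curve in phase space, with initial data `p`. -/
noncomputable def flow (p : ℝ × ℝ) : ℝ → ℝ × ℝ :=
  h.isLipschitzField.flow p

theorem isIntegralCurve_flow (p : ℝ × ℝ) : IsIntegralCurve (h.flow p) (phaseField W) :=
  h.isLipschitzField.isIntegralCurve_flow p

@[simp]
theorem flow_zero (p : ℝ × ℝ) : h.flow p 0 = p :=
  h.isLipschitzField.flow_zero p

theorem flow_add_int (p : ℝ × ℝ) (m : ℤ) (t : ℝ) :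
    h.flow (p + ((m : ℝ), 0)) t = h.flow p t + ((m : ℝ), 0) :=
  h.isLipschitzField.flow_add_of_invariant
    (fun t z ↦ by simp [phaseField, h.add_int]) p t

theorem abs_flow_snd_sub_le {M : ℝ} (hM : ∀ t x, |W t x| ≤ M) (p : ℝ × ℝ) {t : ℝ} (ht : 0 ≤ t) :
    |(h.flow p t).2 - p.2| ≤ M * t := by
  have hmean := convex_univ.norm_image_sub_le_of_norm_hasDerivWithin_le
    (fun t _ ↦ (phaseField.hasDerivAt_snd (h.isIntegralCurve_flow p) t).hasDerivWithinAt)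
    (fun t _ ↦ (norm_neg _).trans_le (hM t _)) (mem_univ 0) (mem_univ t)
  simpa only [Real.norm_eq_abs, sub_zero, flow_zero, abs_of_nonneg ht] using hmean

theorem abs_flow_fst_sub_le {M : ℝ} (hM : ∀ t x, |W t x| ≤ M) (p : ℝ × ℝ) :
    |(h.flow p T).1 - p.1 - T * p.2| ≤ M * T * T := by
  have hM0 : 0 ≤ M := (abs_nonneg _).trans (hM 0 0)
  have hT := h.period_pos.le
  have hmean := (convex_Icc 0 T).norm_image_sub_le_of_norm_hasDerivWithin_le (C := M * T)
    (fun t _ ↦ ((phaseField.hasDerivAt_fst (h.isIntegralCurve_flow p) t).sub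
      ((hasDerivAt_id t).mul_const p.2)).hasDerivWithinAt)
    (fun t ht ↦ by
      rw [one_mul]
      exact (h.abs_flow_snd_sub_le hM p ht.1).trans (by gcongr; exact ht.2))
    (left_mem_Icc.2 hT) (right_mem_Icc.2 hT)
  simpa [abs_of_nonneg hT, sub_right_comm] using hmean

/-- The shooting map, whose zeros are the initial data of the solutions winding `k` times around
the circle in time `T`. Displacements in phase space are encoded as complex numbers. -/
noncomputable def shooting (k : ℤ) (p : ℝ × ℝ) : ℂ :=
  Complex.equivRealProdCLM.symm (h.flow p T - p - ((k : ℝ), 0))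

variable {k : ℤ} {p : ℝ × ℝ}

theorem shooting_re : (h.shooting k p).re = (h.flow p T).1 - p.1 - k :=
  rfl

theorem shooting_eq_zero_iff : h.shooting k p = 0 ↔ h.flow p T = p + ((k : ℝ), 0) := by
  rw [shooting, EmbeddingLike.map_eq_zero_iff, sub_sub, sub_eq_zero]

theorem continuous_shooting : Continuous (h.shooting k) :=
  Complex.equivRealProdCLM.symm.continuous.comp
    (((h.isLipschitzField.continuous_flow h.period_pos.le).sub continuous_id).sub continuous_const)

theorem shooting_add_int (p : ℝ × ℝ) (m : ℤ) :
    h.shooting k (p + ((m : ℝ), 0)) = h.shooting k p := by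
  rw [shooting, h.flow_add_int, add_sub_add_right_eq_sub, shooting]

theorem flow_add_period_of_shooting (hp : h.shooting k p = 0) (t : ℝ) :
    h.flow p (t + T) = h.flow p t + ((k : ℝ), 0) := by
  rw [← h.flow_add_int, ← h.shooting_eq_zero_iff.1 hp]
  exact h.isLipschitzField.flow_add_of_periodic (fun t z ↦ by simp [phaseField, h.add_period t]) p t

theorem isLipschitzField_linearization (p : ℝ × ℝ) :
    IsLipschitzField fun t y ↦ phaseField.spaceFDeriv W t (h.flow p t) y :=
  h.isLipschitzField.linearization (phaseField.continuous_spaceFDeriv h.contDiff)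
    (phaseField.hasFDerivAt h.contDiff) (h.isIntegralCurve_flow p).continuous

theorem eq_zero_of_flow_linearization_eq (hp : h.shooting k p = 0)
    (hnonres : ∀ y : ℝ → ℝ, ContDiff ℝ 2 y →
      (∀ t, deriv (deriv y) t + deriv (W t) (h.flow p t).1 * y t = 0) →
      (∀ t, y (t + T) = y t) → y = 0)
    {q : ℝ × ℝ} (hq : (h.isLipschitzField_linearization p).flow q T = q) : q = 0 := by
  have hA := h.isLipschitzField_linearization p
  have hY : IsIntegralCurve (hA.flow q)
      (phaseField fun t y ↦ deriv (W t) (h.flow p t).1 * y) := hA.isIntegralCurve_flow q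
  have hfield (t : ℝ) (y : ℝ × ℝ) : phaseField.spaceFDeriv W (t + T) (h.flow p (t + T)) y =
      phaseField.spaceFDeriv W t (h.flow p t) y := by
    have hderiv : deriv (W t) ((h.flow p t).1 + k) = deriv (W t) (h.flow p t).1 := by
      simpa using (deriv_add_of_periodic (h.add_one t)).int_mul k (h.flow p t).1
    simp [h.flow_add_period_of_shooting hp, phaseField.spaceFDeriv, h.add_period t, hderiv]
  have hper (t : ℝ) : hA.flow q (t + T) = hA.flow q t := by
    rw [hA.flow_add_of_periodic hfield, hq]
  have hcoeff : Continuous (Function.uncurry fun t y ↦ deriv (W t) (h.flow p t).1 * y) :=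
    ((contDiff_uncurry_deriv h.contDiff (m := 0) (zero_add 1).le).continuous.comp
      (continuous_id.prodMk (h.isIntegralCurve_flow p).continuous.fst)).comp continuous_fst
      |>.mul continuous_snd
  have hfst := hnonres _ (phaseField.contDiff_two_fst hY hcoeff) (phaseField.deriv_deriv_fst_add hY)
    fun t ↦ by rw [hper]
  have hsnd : (fun t ↦ (hA.flow q t).2) = 0 := by
    rw [← phaseField.deriv_fst hY, hfst]
    simp
  rw [← hA.flow_zero q]
  exact Prod.ext (congrFun hfst 0) (congrFun hsnd 0)

theorem hasInjectiveFDerivAt_shooting (hp : h.shooting k p = 0)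
    (hnonres : ∀ y : ℝ → ℝ, ContDiff ℝ 2 y →
      (∀ t, deriv (deriv y) t + deriv (W t) (h.flow p t).1 * y t = 0) →
      (∀ t, y (t + T) = y t) → y = 0) : HasInjectiveFDerivAt (h.shooting k) p := by
  have hA := h.isLipschitzField_linearization p
  have hflow := h.isLipschitzField.hasFDerivAt_flow (phaseField.continuous_spaceFDeriv h.contDiff)
    (phaseField.hasFDerivAt h.contDiff) h.period_pos.le p hA
  refine ⟨_, Complex.equivRealProdCLM.symm.hasFDerivAt.comp p
    ((hflow.sub (hasFDerivAt_id p)).sub_const ((k : ℝ), (0 : ℝ))), ?_⟩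
  refine Complex.equivRealProdCLM.symm.injective.comp
    ((injective_iff_map_eq_zero _).2 fun q hq ↦ h.eq_zero_of_flow_linearization_eq hp hnonres ?_)
  rw [← hA.linearFlow_apply h.period_pos.le]
  exact sub_eq_zero.1 hq

theorem exists_shooting_re_sign (k : ℤ) : ∃ R > 0,
    (∀ p, p.2 ≤ -R → (h.shooting k p).re < 0) ∧ ∀ p, R ≤ p.2 → 0 < (h.shooting k p).re := by
  obtain ⟨M, hM⟩ := h.exists_abs_le
  have hT := h.period_pos
  have hre (p : ℝ × ℝ) : |(h.shooting k p).re - (T * p.2 - k)| ≤ M * T * T := by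
    simpa only [h.shooting_re, sub_sub_sub_cancel_right, sub_right_comm _ (T * p.2)] using
      h.abs_flow_fst_sub_le hM p
  obtain ⟨R, hR⟩ := exists_gt ((|(k : ℝ)| + M * T * T) / T)
  refine ⟨R, lt_of_le_of_lt (by positivity) hR, fun p hp ↦ ?_, fun p hp ↦ ?_⟩
  all_goals
    have hkR := (div_lt_iff₀' hT).1 hR
    have hpR := mul_le_mul_of_nonneg_left hp hT.le
    have hbound := abs_le.1 (hre p)
    linarith [le_abs_self (k : ℝ), neg_abs_le (k : ℝ)]

theorem shooting_mk_add_one (x y : ℝ) : h.shooting k (x + 1, y) = h.shooting k (x, y) := by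
  simpa using h.shooting_add_int (k := k) (x, y) 1

theorem exists_isRegularOnBox_even_ncard
    (hinj : ∀ p, h.shooting k p = 0 → HasInjectiveFDerivAt (h.shooting k) p) :
    ∃ a c d : ℝ, (∀ p, h.shooting k p = 0 → p.2 ∈ Ioo c d) ∧
      IsRegularOnBox (h.shooting k) a (a + 1) c d ∧
      Even (boxZeros (h.shooting k) a (a + 1) c d).ncard := by
  obtain ⟨R, hR, hneg, hpos⟩ := h.exists_shooting_re_sign k
  have hzero (p : ℝ × ℝ) (hp : h.shooting k p = 0) : p.2 ∈ Ioo (-R) R := by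
    constructor <;> by_contra! hc
    · simpa [hp] using hneg p hc
    · simpa [hp] using hpos p hc
  have hfin := finite_zeros_of_isCompact ((isCompact_Icc (a := 0) (b := 1)).prod
    (isCompact_Icc (a := -R) (b := R))) h.continuous_shooting fun p _ ↦ hinj p
  obtain ⟨a, ha01, ha⟩ := (Ioo_infinite zero_lt_one).exists_notMem_finite (hfin.image Prod.fst)
  have hleft (y : ℝ) : h.shooting k (a, y) ≠ 0 := fun e ↦
    ha ⟨(a, y), ⟨⟨Ioo_subset_Icc_self ha01, Ioo_subset_Icc_self (hzero _ e)⟩, e⟩, rfl⟩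
  have hreg : IsRegularOnBox (h.shooting k) a (a + 1) (-R) R := by
    refine ⟨h.continuous_shooting, by linarith, by linarith, ?_, fun p _ ↦ hinj p⟩
    rintro ⟨x, y⟩ ⟨⟨hx, -⟩, hxy⟩ h0
    have hxa : x ≠ a := by
      rintro rfl
      exact hleft y h0
    have hxa1 : x ≠ a + 1 := by
      rintro rfl
      exact hleft y ((h.shooting_mk_add_one a y).symm.trans h0)
    exact hxy ⟨⟨hx.1.lt_of_ne' hxa, hx.2.lt_of_ne hxa1⟩, hzero _ h0⟩
  exact ⟨a, -R, R, hzero, hreg, even_ncard_boxZeros_of_periodic h.shooting_mk_add_one hreg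
    (fun x ↦ hneg (x, -R) le_rfl) (fun x ↦ hpos (x, R) le_rfl)⟩

end IsPeriodicForce

/-! ### Existence by minimisation of the discretised action -/

section DiscreteAction

/-- The time-discretised action `∑ (ẋ² / 2 - U(t, x)) τ` of the polygon `x i = η i + c * i` with
time step `τ`. The polygon winds `n * c` times around the circle in `n` steps; removing the linear
part makes its remainder `η` periodic. -/
noncomputable def discreteAction (U : ℝ → ℝ → ℝ) (n : ℕ) [NeZero n] (τ c : ℝ)
    (η : ZMod n → ℝ) : ℝ :=
  ∑ i, ((η (i + 1) - η i + c) ^ 2 / (2 * τ) - τ * U (τ * i.val) (η i + c * i.val))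

variable {U W : ℝ → ℝ → ℝ} {B : ℝ} {n : ℕ} [NeZero n] {τ c : ℝ} {η : ZMod n → ℝ}

theorem discreteAction_add_int (hU1 : ∀ t, Function.Periodic (U t) 1) (η : ZMod n → ℝ) (m : ℤ) :
    discreteAction U n τ c (fun i ↦ η i + m) = discreteAction U n τ c η := by
  have hper (t x : ℝ) : U t (x + m) = U t x := by simpa using (hU1 t).int_mul m x
  simp only [discreteAction, add_sub_add_right_eq_sub, add_right_comm _ (m : ℝ), hper]

theorem continuous_discreteAction (hU : ∀ t, Continuous (U t)) :
    Continuous (discreteAction U n τ c) :=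
  continuous_finsetSum _ fun i _ ↦ Continuous.sub (by fun_prop)
    (continuous_const.mul ((hU _).comp (by fun_prop)))

theorem abs_sub_le_of_discreteAction_le (hUB : ∀ t x, U t x ≤ B) (hτ : 0 < τ) {A : ℝ}
    (hη : discreteAction U n τ c η ≤ A) (i : ZMod n) :
    |η (i + 1) - η i| ≤ √(2 * τ * (A + n * (τ * B))) + |c| := by
  have hpot : ∑ j : ZMod n, τ * U (τ * j.val) (η j + c * j.val) ≤ n * (τ * B) := by
    refine (Finset.sum_le_card_nsmul _ _ (τ * B) fun j _ ↦ by gcongr; exact hUB _ _).trans_eq ?_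
    rw [Finset.card_univ, ZMod.card, nsmul_eq_mul]
  have hkin := Finset.single_le_sum (f := fun j : ZMod n ↦ (η (j + 1) - η j + c) ^ 2 / (2 * τ))
    (fun j _ ↦ by positivity) (Finset.mem_univ i)
  rw [discreteAction, Finset.sum_sub_distrib] at hη
  have hsq : (η (i + 1) - η i + c) ^ 2 ≤ 2 * τ * (A + n * (τ * B)) :=
    (div_le_iff₀' (by positivity)).1 (by linarith)
  calc |η (i + 1) - η i| = |(η (i + 1) - η i + c) - c| := by rw [add_sub_cancel_right]
    _ ≤ |η (i + 1) - η i + c| + |c| := abs_sub _ _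
    _ ≤ √(2 * τ * (A + n * (τ * B))) + |c| := by gcongr; exact Real.abs_le_sqrt hsq

theorem dist_apply_zero_le {C : ℝ} (hη : ∀ i, |η (i + 1) - η i| ≤ C) (i : ZMod n) :
    dist (η 0) (η i) ≤ n * C := by
  have hsum := dist_le_range_sum_of_dist_le (f := fun j : ℕ ↦ η j) (d := fun _ ↦ C) i.val
    fun {j} _ ↦ by
      rw [dist_comm, Real.dist_eq]
      simpa using hη j
  have hC : 0 ≤ C := (abs_nonneg _).trans (hη 0)
  have hval : (i.val : ℝ) ≤ n := Nat.cast_le.2 (ZMod.val_lt i).le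
  simp only [Nat.cast_zero, ZMod.natCast_zmod_val, Finset.sum_const, Finset.card_range,
    nsmul_eq_mul] at hsum
  exact hsum.trans (by gcongr)

theorem isCompact_discreteAction_sublevel (hU : ∀ t, Continuous (U t))
    (hUB : ∀ t x, U t x ≤ B) (hτ : 0 < τ) (A : ℝ) :
    IsCompact {η : ZMod n → ℝ | η 0 ∈ Icc 0 1 ∧ discreteAction U n τ c η ≤ A} := by
  refine Metric.isCompact_of_isClosed_isBounded ((isClosed_Icc.preimage (continuous_apply 0)).inter
    (isClosed_le (continuous_discreteAction hU) continuous_const)) ?_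
  set C := √(2 * τ * (A + n * (τ * B))) + |c|
  refine (Metric.isBounded_closedBall (x := (0 : ZMod n → ℝ)) (r := 1 + n * C)).subset
    fun η ⟨hη0, hη⟩ ↦ ?_
  rw [mem_closedBall_zero_iff, pi_norm_le_iff_of_nonneg (by positivity)]
  intro i
  have hdist := dist_apply_zero_le (abs_sub_le_of_discreteAction_le hUB hτ hη) i
  calc ‖η i‖ ≤ ‖η 0‖ + dist (η 0) (η i) := by
        rw [dist_eq_norm]
        exact norm_le_norm_add_norm_sub _ _
    _ ≤ 1 + n * C := by
        gcongr
        rw [Real.norm_of_nonneg hη0.1]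
        exact hη0.2

theorem exists_isMinOn_discreteAction (hU : ∀ t, Continuous (U t))
    (hU1 : ∀ t, Function.Periodic (U t) 1) (hUB : ∀ t x, U t x ≤ B) (hτ : 0 < τ) :
    ∃ η : ZMod n → ℝ, η 0 ∈ Icc 0 1 ∧ IsMinOn (discreteAction U n τ c) univ η := by
  obtain ⟨η, ⟨hη0, hηA⟩, hmin⟩ :=
    (isCompact_discreteAction_sublevel (n := n) (c := c) hU hUB hτ
      (discreteAction U n τ c 0)).exists_isMinOn
      ⟨0, by simp⟩ (continuous_discreteAction hU).continuousOn
  refine ⟨η, hη0, fun ξ _ ↦ ?_⟩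
  rcases le_total (discreteAction U n τ c ξ) (discreteAction U n τ c 0) with hξ | hξ
  · have hshift := discreteAction_add_int (τ := τ) (c := c) hU1 ξ (-⌊ξ 0⌋)
    have hfract : ξ 0 + (-⌊ξ 0⌋ : ℤ) ∈ Icc (0 : ℝ) 1 := by
      rw [Int.cast_neg, ← sub_eq_add_neg, Int.self_sub_floor]
      exact ⟨Int.fract_nonneg _, (Int.fract_lt_one _).le⟩
    exact (hmin ⟨hfract, hshift.trans_le hξ⟩).trans_eq hshift
  · exact hηA.trans hξ

theorem hasDerivAt_discreteAction_add_smul (hUW : ∀ t x, HasDerivAt (U t) (W t x) x)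
    (η φ : ZMod n → ℝ) :
    HasDerivAt (fun s : ℝ ↦ discreteAction U n τ c (η + s • φ))
      (∑ j, ((η (j + 1) - η j + c) / τ * (φ (j + 1) - φ j) -
        τ * (W (τ * j.val) (η j + c * j.val) * φ j))) 0 := by
  have hline (j : ZMod n) : HasDerivAt (fun s : ℝ ↦ (η + s • φ) j) (φ j) 0 :=
    (hasDerivAt_mul_const (φ j)).const_add (η j)
  refine HasDerivAt.fun_sum fun j _ ↦ HasDerivAt.sub ?_ ?_
  · refine (((((hline (j + 1)).sub (hline j)).add_const c).pow 2).div_const (2 * τ)).congr_deriv ?_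
    simp
    field_simp
  · have hpot : HasDerivAt (U (τ * j.val)) (W (τ * j.val) (η j + c * j.val))
        ((η + (0 : ℝ) • φ) j + c * j.val) := by
      simpa using hUW (τ * j.val) (η j + c * j.val)
    exact (hpot.comp 0 ((hline j).add_const (c * j.val))).const_mul τ

theorem discrete_euler_lagrange (hUW : ∀ t x, HasDerivAt (U t) (W t x) x)
    (hη : IsMinOn (discreteAction U n τ c) univ η) (i : ZMod n) :
    (η (i + 1) - η i + c) / τ =
      (η i - η (i - 1) + c) / τ - τ * W (τ * i.val) (η i + c * i.val) := by
  have hcrit := IsLocalMin.hasDerivAt_eq_zero (a := 0)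
    (Eventually.of_forall fun s ↦ by simpa using hη (mem_univ (η + s • Pi.single i 1)))
    (hasDerivAt_discreteAction_add_smul hUW η (Pi.single i 1))
  have hparts (φ : ZMod n → ℝ) : ∑ j, (η (j + 1) - η j + c) / τ * φ (j + 1) =
      ∑ j, (η j - η (j - 1) + c) / τ * φ j := by
    rw [← Equiv.sum_comp (Equiv.addRight (1 : ZMod n)) fun j ↦ (η j - η (j - 1) + c) / τ * φ j]
    simp
  simp only [mul_sub, Finset.sum_sub_distrib, hparts (Pi.single i 1)] at hcrit
  simp only [Pi.single_apply, mul_ite, mul_one, mul_zero, Finset.sum_ite_eq', Finset.mem_univ,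
    if_true] at hcrit
  linarith

end DiscreteAction

/-- `w` performs `n` steps of the symplectic (semi-implicit) Euler scheme with time step `τ` for
`ẍ + W(t, x) = 0`: positions are updated with the new velocity. -/
def IsSymplecticEuler (W : ℝ → ℝ → ℝ) (τ : ℝ) (n : ℕ) (w : ℕ → ℝ × ℝ) : Prop :=
  ∀ i < n, w (i + 1) = w i + τ • ((w (i + 1)).2, -W (τ * i) (w i).1)

namespace IsSymplecticEuler

variable {U W : ℝ → ℝ → ℝ} {B M T τ : ℝ} {n : ℕ} {w : ℕ → ℝ × ℝ}

theorem exists_winding (hUW : ∀ t x, HasDerivAt (U t) (W t x) x)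
    (hU1 : ∀ t, Function.Periodic (U t) 1) (hUB : ∀ t x, U t x ≤ B) (hT : 0 < T) (hn : 0 < n)
    (k : ℤ) :
    ∃ w, IsSymplecticEuler W (T / n) n w ∧ (w 0).1 ∈ Icc 0 1 ∧ w n = w 0 + ((k : ℝ), 0) := by
  have : NeZero n := ⟨hn.ne'⟩
  have hτ : 0 < T / n := by positivity
  obtain ⟨η, hη0, hη⟩ := exists_isMinOn_discreteAction (n := n) (c := k / n)
    (fun t ↦ continuous_iff_continuousAt.2 fun x ↦ (hUW t x).continuousAt) hU1 hUB hτ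
  refine ⟨fun i ↦ (η i + k / n * i, (η i - η (i - 1) + k / n) / (T / n)), fun i hi ↦ ?_,
    by simpa using hη0, ?_⟩
  · have hEL := discrete_euler_lagrange hUW hη i
    rw [ZMod.val_natCast_of_lt hi] at hEL
    ext
    · simp [mul_div_cancel₀ _ hτ.ne']
      ring
    · simpa [← sub_eq_add_neg] using hEL
  · ext
    · simp
    · simp

variable (hw : IsSymplecticEuler W τ n w) (hM : ∀ t x, |W t x| ≤ M) (hτ : 0 ≤ τ)
include hw

theorem fst_succ {i : ℕ} (hi : i < n) : (w (i + 1)).1 = (w i).1 + τ * (w (i + 1)).2 :=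
  congrArg Prod.fst (hw i hi)

theorem snd_succ {i : ℕ} (hi : i < n) : (w (i + 1)).2 = (w i).2 - τ * W (τ * i) (w i).1 := by
  simpa [sub_eq_add_neg] using congrArg Prod.snd (hw i hi)

include hM hτ

theorem abs_snd_succ_sub_le {i : ℕ} (hi : i < n) : |(w (i + 1)).2 - (w i).2| ≤ τ * M := by
  rw [hw.snd_succ hi, sub_sub_cancel_left, abs_neg, abs_mul, abs_of_nonneg hτ]
  gcongr
  exact hM _ _

theorem norm_sub_sub_smul_phaseField_le {i : ℕ} (hi : i < n) :
    ‖w (i + 1) - w i - τ • phaseField W (τ * i) (w i)‖ ≤ τ * M * τ := by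
  have hdefect : w (i + 1) - w i - τ • phaseField W (τ * i) (w i) =
      (τ * ((w (i + 1)).2 - (w i).2), 0) := by
    ext
    · simp [phaseField, hw.fst_succ hi, mul_sub]
    · simp [phaseField, hw.snd_succ hi]
  rw [hdefect, Prod.norm_mk, norm_zero, max_eq_left (norm_nonneg _), norm_mul,
    Real.norm_of_nonneg hτ, mul_comm]
  gcongr
  exact hw.abs_snd_succ_sub_le hM hτ hi

theorem abs_snd_sub_le {i : ℕ} (hi : i ≤ n) : |(w i).2 - (w 0).2| ≤ n * (τ * M) := by
  have hM0 : 0 ≤ M := (abs_nonneg _).trans (hM 0 0)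
  have hsum := dist_le_range_sum_of_dist_le (f := fun j ↦ (w j).2) (d := fun _ ↦ τ * M) i
    fun hj ↦ by
      rw [dist_comm]
      exact hw.abs_snd_succ_sub_le hM hτ (hj.trans_le hi)
  rw [Finset.sum_const, Finset.card_range, nsmul_eq_mul, dist_comm] at hsum
  exact hsum.trans (by gcongr)

theorem abs_fst_sub_le :
    |(w n).1 - (w 0).1 - n * τ * (w 0).2| ≤ n * τ * (n * τ * M) := by
  have hsum := dist_le_range_sum_of_dist_le (f := fun j ↦ (w j).1 - j * τ * (w 0).2)
    (d := fun _ ↦ τ * (n * (τ * M))) n fun {j} hj ↦ by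
      have hstep : (w (j + 1)).1 - (j + 1 : ℕ) * τ * (w 0).2 - ((w j).1 - j * τ * (w 0).2) =
          τ * ((w (j + 1)).2 - (w 0).2) := by
        rw [hw.fst_succ hj]
        push_cast
        ring
      rw [dist_comm, Real.dist_eq, hstep, abs_mul, abs_of_nonneg hτ]
      gcongr
      exact hw.abs_snd_sub_le hM hτ hj
  rw [Finset.sum_const, Finset.card_range, nsmul_eq_mul, dist_comm, Real.dist_eq] at hsum
  simpa [mul_assoc, sub_right_comm] using hsum

end IsSymplecticEuler

theorem IsPeriodicForce.exists_shooting_eq_zero {U W : ℝ → ℝ → ℝ} {B T : ℝ}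
    (h : IsPeriodicForce W T) (hUW : ∀ t x, HasDerivAt (U t) (W t x) x)
    (hU1 : ∀ t, Function.Periodic (U t) 1) (hUB : ∀ t x, U t x ≤ B) (k : ℤ) :
    ∃ p, h.shooting k p = 0 := by
  have hT := h.period_pos
  obtain ⟨M, hM⟩ := h.exists_abs_le
  choose w hw hw0 hwk using fun n : ℕ ↦
    IsSymplecticEuler.exists_winding hUW hU1 hUB hT n.succ_pos k
  have hτ (n : ℕ) : 0 ≤ T / (n + 1 : ℕ) := by positivity
  have hvel (n : ℕ) : |(w n 0).2| ≤ (|(k : ℝ)| + T * (T * M)) / T := by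
    have hdisp := (hw n).abs_fst_sub_le hM (hτ n)
    rw [mul_div_cancel₀ T (Nat.cast_ne_zero.2 n.succ_ne_zero), hwk n, Prod.fst_add,
      add_sub_cancel_left] at hdisp
    rw [le_div_iff₀' hT, ← abs_of_pos hT, ← abs_mul, abs_of_pos hT]
    linarith [abs_sub_abs_le_abs_sub (T * (w n 0).2) k, abs_sub_comm (k : ℝ) (T * (w n 0).2)]
  obtain ⟨p, -, φ, hφ, hlim⟩ := (isCompact_Icc.prod isCompact_Icc).tendsto_subseq
    (x := fun n ↦ w n 0) fun n ↦ ⟨hw0 n, abs_le.1 (hvel n)⟩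
  refine ⟨p, h.shooting_eq_zero_iff.2 ?_⟩
  have hN : Tendsto (fun n ↦ φ n + 1) atTop atTop :=
    (tendsto_add_atTop_nat 1).comp hφ.tendsto_atTop
  have hρ : Tendsto (fun n ↦ T / (φ n + 1 : ℕ) * M) atTop (𝓝 0) := by
    simpa using ((tendsto_const_div_atTop_nhds_zero_nat T).comp hN).mul_const (M : ℝ)
  have heuler := h.isLipschitzField.tendsto_euler hT.le hN hρ
    (fun n ↦ mul_nonneg (hτ _) M.2) (w := fun n ↦ w (φ n)) hlim
    fun n i hi ↦ (hw (φ n)).norm_sub_sub_smul_phaseField_le hM (hτ _) hi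
  simp only [hwk] at heuler
  exact tendsto_nhds_unique heuler (hlim.add_const _)

/-! ### Counting fundamental solutions -/

section FundamentalSolutions

variable {V : ℝ → ℝ → ℝ} {T₀ a c d : ℝ} {k₁ : ℤ} {k₂ : ℕ} {x : ℝ → ℝ} {p : ℝ × ℝ}
  (h : IsPeriodicForce (fun t ↦ deriv (V t)) (k₂ * T₀))

theorem flow_eq_of_mem_fundSolutions (hx : x ∈ fundSolutions V T₀ k₁ k₂) (t : ℝ) :
    h.flow (x 0, deriv x 0) t = (x t, deriv x t) :=
  (congrFun (h.isLipschitzField.eq_flow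
    (phaseField.isIntegralCurve_of_contDiff hx.1 hx.2.1)) t).symm

theorem shooting_eq_zero_of_mem_fundSolutions (hx : x ∈ fundSolutions V T₀ k₁ k₂) :
    h.shooting k₁ (x 0, deriv x 0) = 0 := by
  have hderiv : deriv x (0 + k₂ * T₀) = deriv x 0 := by
    rw [← deriv_comp_add_const, funext hx.2.2, deriv_add_const']
  rw [h.shooting_eq_zero_iff, flow_eq_of_mem_fundSolutions h hx, ← zero_add (k₂ * T₀ : ℝ),
    hx.2.2 0, hderiv]
  simp

theorem flow_fst_mem_fundSolutions (hp : h.shooting k₁ p = 0) :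
    (fun t ↦ (h.flow p t).1) ∈ fundSolutions V T₀ k₁ k₂ := by
  have hz := h.isIntegralCurve_flow p
  refine ⟨phaseField.contDiff_two_fst hz h.contDiff.continuous,
    phaseField.deriv_deriv_fst_add hz, fun t ↦ ?_⟩
  beta_reduce
  rw [h.flow_add_period_of_shooting hp, Prod.fst_add]

/-- The fundamental solution, modulo integer shifts, with initial data `p`. -/
noncomputable def fundSolutionClass (p : boxZeros (h.shooting k₁) a (a + 1) c d) :
    Quotient (fundSetoid V T₀ k₁ k₂) :=
  Quotient.mk _ ⟨_, flow_fst_mem_fundSolutions h p.2.2⟩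

theorem fundSolutionClass_injective :
    Function.Injective (fundSolutionClass (a := a) (c := c) (d := d) (k₁ := k₁) h) := by
  rintro ⟨p, hp, hp0⟩ ⟨q, hq, hq0⟩ hpq
  obtain ⟨m, hm⟩ := Quotient.exact hpq
  have hm0 : m = 0 := by
    have hfst : q.1 = p.1 + m := by simpa using hm 0
    have hm1 : |(m : ℝ)| < 1 := abs_lt.2
      ⟨by linarith [hp.1.2, hq.1.1], by linarith [hp.1.1, hq.1.2]⟩
    exact Int.abs_lt_one_iff.1 (by exact_mod_cast hm1)
  have hfst : (fun t ↦ (h.flow q t).1) = fun t ↦ (h.flow p t).1 := by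
    funext t
    simpa [hm0] using hm t
  have hsnd := congrArg deriv hfst
  rw [phaseField.deriv_fst (h.isIntegralCurve_flow q),
    phaseField.deriv_fst (h.isIntegralCurve_flow p)] at hsnd
  have hqp : h.flow q 0 = h.flow p 0 := Prod.ext (congrFun hfst 0) (congrFun hsnd 0)
  exact Subtype.ext (by simpa using hqp.symm)

theorem fundSolutionClass_surjective (hreg : IsRegularOnBox (h.shooting k₁) a (a + 1) c d)
    (hcd : ∀ p, h.shooting k₁ p = 0 → p.2 ∈ Ioo c d) :
    Function.Surjective (fundSolutionClass (a := a) (c := c) (d := d) (k₁ := k₁) h) := by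
  rintro ⟨x, hx⟩
  set m : ℤ := ⌊x 0 - a⌋
  have hshift : (x 0, deriv x 0) = (x 0 - m, deriv x 0) + ((m : ℝ), 0) := by simp
  have h0 : h.shooting k₁ (x 0 - m, deriv x 0) = 0 := by
    rw [← h.shooting_add_int _ m, ← hshift, shooting_eq_zero_of_mem_fundSolutions h hx]
  have hmem : (x 0 - m, deriv x 0) ∈ Icc a (a + 1) ×ˢ Icc c d :=
    ⟨⟨by linarith [Int.floor_le (x 0 - a)], by linarith [Int.lt_floor_add_one (x 0 - a)]⟩,
      Ioo_subset_Icc_self (hcd _ h0)⟩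
  refine ⟨⟨_, hreg.mem_boxZeros hmem h0⟩, Quotient.sound ⟨m, fun t ↦ ?_⟩⟩
  have hflow := flow_eq_of_mem_fundSolutions h hx t
  rw [hshift, h.flow_add_int] at hflow
  exact (congrArg Prod.fst hflow).symm

theorem card_quotient_fundSetoid (hreg : IsRegularOnBox (h.shooting k₁) a (a + 1) c d)
    (hcd : ∀ p, h.shooting k₁ p = 0 → p.2 ∈ Ioo c d) :
    Nat.card (Quotient (fundSetoid V T₀ k₁ k₂)) =
      (boxZeros (h.shooting k₁) a (a + 1) c d).ncard :=
  (Nat.card_eq_of_bijective _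
    ⟨fundSolutionClass_injective h, fundSolutionClass_surjective h hreg hcd⟩).symm

end FundamentalSolutions

end

theorem fundamental_solutions_even_count_general (V : ℝ → ℝ → ℝ) (T₀ : ℝ) (hT₀ : 0 < T₀)
    (hV : ContDiff ℝ 2 (Function.uncurry V))
    (hVx : ∀ t y, V t (y + 1) = V t y)
    (hVt : ∀ t y, V (t + T₀) y = V t y)
    (k₁ : ℤ) (k₂ : ℕ) (hk₂ : 0 < k₂)
    (hnonres : ∀ x ∈ fundSolutions V T₀ k₁ k₂, ∀ y : ℝ → ℝ, ContDiff ℝ 2 y →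
      (∀ t, deriv (deriv y) t + deriv (deriv (V t)) (x t) * y t = 0) →
      (∀ t, y (t + k₂ * T₀) = y t) → y = 0) :
    ∃ r : ℕ, 1 ≤ r ∧
      Nat.card (Quotient (fundSetoid V T₀ k₁ k₂)) = 2 * r := by
  have hT : 0 < k₂ * T₀ := by positivity
  have hVT : Function.Periodic V (k₂ * T₀) :=
    Function.Periodic.nat_mul (fun t ↦ funext (hVt t)) k₂
  have h := IsPeriodicForce.deriv_potential hT hV hVx hVT
  obtain ⟨B, hB⟩ := exists_abs_le_of_periodic hV.continuous one_pos hT hVx hVT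
  obtain ⟨p₀, hp₀⟩ := h.exists_shooting_eq_zero
    (hasDerivAt_of_contDiff_uncurry hV two_ne_zero) hVx
    (fun t x ↦ (le_abs_self _).trans (hB t x)) k₁
  obtain ⟨a, c, d, hcd, hreg, r, hr⟩ := h.exists_isRegularOnBox_even_ncard fun p hp ↦
    h.hasInjectiveFDerivAt_shooting hp (hnonres _ (flow_fst_mem_fundSolutions h hp))
  have hcard := card_quotient_fundSetoid h hreg hcd
  have hpos : 0 < Nat.card (Quotient (fundSetoid V T₀ k₁ k₂)) := by
    have : Finite (boxZeros (h.shooting k₁) a (a + 1) c d) := hreg.finite_boxZeros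
    exact Nat.card_pos_iff.2 ⟨⟨Quotient.mk _ ⟨_, flow_fst_mem_fundSolutions h hp₀⟩⟩,
      Finite.of_surjective _ (fundSolutionClass_surjective h hreg hcd)⟩
  exact ⟨r, by omega, by omega⟩

/-- if the equation is non-resonant, then for each rotation frequency
`ρ = k₁/(k₂T₀)` with `k₁, k₂` coprime, the number of fundamental solutions (counted
in `S¹`, i.e. modulo integer shifts) equals `2r` for some integer `r ≥ 1`; in
particular it is finite, even and positive. -/
theorem fundamental_solutions_even_count (V : ℝ → ℝ → ℝ) (T₀ : ℝ) (hT₀ : 0 < T₀)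
    (hV : ContDiff ℝ 2 (Function.uncurry V))
    (hVx : ∀ t y, V t (y + 1) = V t y)
    (hVt : ∀ t y, V (t + T₀) y = V t y)
    (hnonres : ∀ (x : ℝ → ℝ) (m₁ : ℤ) (m₂ : ℕ), 0 < m₂ → ContDiff ℝ 2 x →
      (∀ t, deriv (deriv x) t + deriv (V t) (x t) = 0) →
      (∀ t, x (t + m₂ * T₀) = x t + m₁) →
      ∀ y : ℝ → ℝ, ContDiff ℝ 2 y →
        (∀ t, deriv (deriv y) t + deriv (deriv (V t)) (x t) * y t = 0) →
        (∀ t, y (t + m₂ * T₀) = y t) → y = 0)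
    (k₁ : ℤ) (k₂ : ℕ) (hk₂ : 0 < k₂) (hcop : Nat.Coprime k₁.natAbs k₂) :
    ∃ r : ℕ, 1 ≤ r ∧
      Nat.card (Quotient (fundSetoid V T₀ k₁ k₂)) = 2 * r :=
  fundamental_solutions_even_count_general V T₀ hT₀ hV hVx hVt k₁ k₂ hk₂
    fun x hx ↦ hnonres x k₁ k₂ hk₂ hx.1 hx.2.1 hx.2.2
end
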